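/- arXiv:2409.01634 — 2 statements merged into one kernel-verified Lean document; each statement's English description precedes it below -/
import Mathlib

section
/- Let G be a finite p-solvable group with O_{p'}(G) = 1 and non-abelian Sylow p-subgroup P. Let p^a = m(P) be the smallest degree of a non-linear irreducible character of P. Then there exists χ ∈ Irr(G) such that the p-part of χ(1) satisfies 1 ≠ χ(1)_p ≤ p^a. -/
open scoped BigOperators Classical

noncomputable section

/-- `χ` is the character of some irreducible complex representation of `G`. -/
def IsIrrChar {G : Type} [Group G] (χ : G → ℂ) : Prop :=
  ∃ V : FDRep ℂ G, CategoryTheory.Simple V ∧ FDRep.character V = χ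

/-- The degree of a character, as a natural number. -/
def charDeg {G : Type} [Group G] (χ : G → ℂ) : ℕ := ⌊(χ 1).re⌋₊

/-- `p`-part of a natural number: the largest power of `p` dividing `n`. -/
def pPart (p n : ℕ) : ℕ := p ^ (n.factorization p)

/-- Inner product of class functions on a finite group. -/
def charInner (G : Type) [Group G] [Fintype G] (α β : G → ℂ) : ℂ :=
  (Nat.card G : ℂ)⁻¹ * ∑ g : G, α g * (starRingEnd ℂ) (β g)

/-- Restriction of a class function to a subgroup. -/
def charRes {G : Type} [Group G] (H : Subgroup G) (χ : G → ℂ) : H → ℂ := fun h => χ (h : G)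

/-- Induced class function. -/
def charInd {G : Type} [Group G] [Fintype G] (U : Subgroup G) (τ : U → ℂ) : G → ℂ :=
  fun g => (Nat.card U : ℂ)⁻¹ * ∑ x : G, if h : x * g * x⁻¹ ∈ U then τ ⟨x * g * x⁻¹, h⟩ else 0

/-- `G` is `p`-solvable: it has a subnormal series each of whose factors is a
`p`-group or a `p'`-group (expressed element-wise). -/
def IsPSolvable (p : ℕ) (G : Type) [Group G] : Prop :=
  ∃ (n : ℕ) (s : Fin (n + 1) → Subgroup G),
    s 0 = ⊥ ∧ s (Fin.last n) = ⊤ ∧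
    ∀ i : Fin n, s i.castSucc ≤ s i.succ ∧
      ((s i.castSucc).subgroupOf (s i.succ)).Normal ∧
      ((∀ x ∈ s i.succ, ∃ k : ℕ, x ^ p ^ k ∈ s i.castSucc) ∨
       (∀ x ∈ s i.succ, ∃ m : ℕ, Nat.Coprime m p ∧ x ^ m ∈ s i.castSucc))

set_option linter.all false

section helpers

open Module

section basics

variable {G : Type} [Group G] {V : Type} [AddCommGroup V] [Module ℂ V]

/-- invariant subspace -/
def RInv (ρ : Representation ℂ G V) (U : Submodule ℂ V) : Prop := ∀ g, ∀ v ∈ U, ρ g v ∈ U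

/-- irreducible representation (elementary form) -/
def RIrr (ρ : Representation ℂ G V) : Prop :=
  Nontrivial V ∧ ∀ U : Submodule ℂ V, RInv ρ U → U = ⊥ ∨ U = ⊤

/-- restriction to an invariant subspace -/
def subrep (ρ : Representation ℂ G V) (U : Submodule ℂ V) (hU : RInv ρ U) :
    Representation ℂ G U where
  toFun g := (ρ g).restrict (hU g)
  map_one' := by ext; simp
  map_mul' x y := by ext; simp

@[simp] lemma subrep_apply (ρ : Representation ℂ G V) (U : Submodule ℂ V) (hU : RInv ρ U)
    (g : G) (v : U) : ((subrep ρ U hU g v : U) : V) = ρ g v := rfl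

lemma rinv_map_eq (ρ : Representation ℂ G V) {U : Submodule ℂ V} (hU : RInv ρ U) (g : G) :
    U.map (ρ g) = U := by
  apply le_antisymm
  · rintro _ ⟨v, hv, rfl⟩; exact hU g v hv
  · intro v hv
    exact ⟨ρ g⁻¹ v, hU _ _ hv, by simp⟩

lemma maschke_compl [Finite G] (ρ : Representation ℂ G V) (U : Submodule ℂ V) (hU : RInv ρ U) :
    ∃ U' : Submodule ℂ V, RInv ρ U' ∧ IsCompl U U' := by
  have : NeZero (Nat.card G : ℂ) := ⟨by simp [Nat.card_pos.ne']⟩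
  obtain ⟨W, hW⟩ := exists_isCompl (⟨U, hU⟩ : Subrepresentation ρ)
  refine ⟨W.toSubmodule, fun g v hv => W.apply_mem_toSubmodule g hv, ?_⟩
  constructor
  · rw [disjoint_iff]
    have := hW.disjoint
    rw [disjoint_iff] at this
    exact congrArg Subrepresentation.toSubmodule this
  · rw [codisjoint_iff]
    have := hW.codisjoint
    rw [codisjoint_iff] at this
    exact congrArg Subrepresentation.toSubmodule this

/-- minimal invariant subspace -/
def RMin (ρ : Representation ℂ G V) (U : Submodule ℂ V) : Prop :=
  U ≠ ⊥ ∧ RInv ρ U ∧ ∀ W ≤ U, RInv ρ W → W = ⊥ ∨ W = U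

lemma rmin_irr (ρ : Representation ℂ G V) (U : Submodule ℂ V) (h : RMin ρ U) :
    RIrr (subrep ρ U h.2.1) := by
  refine ⟨Submodule.nontrivial_iff_ne_bot.2 h.1, fun W hW => ?_⟩
  rcases h.2.2 (W.map U.subtype) (Submodule.map_subtype_le _ _) (by
    rintro g _ ⟨v, hv, rfl⟩
    exact ⟨_, hW g v hv, rfl⟩) with h1 | h1
  · left
    apply Submodule.map_injective_of_injective U.injective_subtype
    simpa using h1
  · right
    apply Submodule.map_injective_of_injective U.injective_subtype
    simpa using h1

variable [FiniteDimensional ℂ V]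

lemma exists_rmin (ρ : Representation ℂ G V) (U : Submodule ℂ V) (h : RInv ρ U) (h0 : U ≠ ⊥) :
    ∃ W ≤ U, RMin ρ W := by
  induction hn : finrank ℂ U using Nat.strong_induction_on generalizing U with
  | _ n ih =>
    by_cases hm : RMin ρ U
    · exact ⟨U, le_rfl, hm⟩
    · simp only [RMin, not_and, not_forall] at hm
      obtain ⟨W, hWU, hW, hne⟩ := hm h0 h
      push Not at hne
      have hlt : W < U := lt_of_le_of_ne hWU hne.2
      obtain ⟨W', h1, h2⟩ := ih _ (hn ▸ Submodule.finrank_lt_finrank_of_lt hlt) W hW hne.1 rfl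
      exact ⟨W', h1.trans hWU, h2⟩

lemma exists_rmin_not_dvd [Finite G] (ρ : Representation ℂ G V) (n : ℕ) (U : Submodule ℂ V)
    (h : RInv ρ U) (h0 : ¬ n ∣ finrank ℂ U) :
    ∃ W ≤ U, RMin ρ W ∧ ¬ n ∣ finrank ℂ W := by
  induction hn : finrank ℂ U using Nat.strong_induction_on generalizing U with
  | _ k ih =>
    have hU0 : U ≠ ⊥ := by rintro rfl; simp at h0
    by_cases hm : RMin ρ U
    · exact ⟨U, le_rfl, hm, h0⟩
    · simp only [RMin, not_and, not_forall] at hm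
      obtain ⟨W, hWU, hW, hne⟩ := hm hU0 h
      push Not at hne
      have hlt : W < U := lt_of_le_of_ne hWU hne.2
      obtain ⟨C, hC, hWC⟩ := maschke_compl ρ W hW
      have hCU : RInv ρ (C ⊓ U) := fun g v hv => ⟨hC g v hv.1, h g v hv.2⟩
      have hsup : W ⊔ (C ⊓ U) = U := by
        rw [← sup_inf_assoc_of_le C hWU, hWC.sup_eq_top, top_inf_eq]
      have hinf : W ⊓ (C ⊓ U) = ⊥ := by
        rw [← inf_assoc, hWC.inf_eq_bot, bot_inf_eq]
      have hdim := Submodule.finrank_sup_add_finrank_inf_eq W (C ⊓ U)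
      rw [hsup, hinf, finrank_bot, add_zero] at hdim
      have hWpos : 0 < finrank ℂ W := by
        rw [Nat.pos_iff_ne_zero]; intro h; exact hne.1 (Submodule.finrank_eq_zero.1 h)
      by_cases hd : n ∣ finrank ℂ W
      · have hd2 : ¬ n ∣ finrank ℂ (C ⊓ U : Submodule ℂ V) := fun h' => h0 (hdim ▸ dvd_add hd h')
        obtain ⟨W', h1, h2, h3⟩ := ih _ (by omega) (C ⊓ U) hCU hd2 rfl
        exact ⟨W', h1.trans inf_le_right, h2, h3⟩
      · obtain ⟨W', h1, h2, h3⟩ := ih _ (hn ▸ Submodule.finrank_lt_finrank_of_lt hlt) W hW hd rfl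
        exact ⟨W', h1.trans hWU, h2, h3⟩

end basics

section coind

variable {G : Type} [Group G] [Finite G] (J : Subgroup G) {E : Type} [AddCommGroup E] [Module ℂ E]
  [FiniteDimensional ℂ E] (σ : Representation ℂ J E)

lemma finrank_coind :
    finrank ℂ (Representation.coindV J.subtype σ) = J.index * finrank ℂ E := by
  have : Fintype (G ⧸ J) := Fintype.ofFinite _
  let F : Representation.coindV J.subtype σ →ₗ[ℂ] ((G ⧸ J) → E) :=
    { toFun := fun f q => f.1 (q.out)⁻¹
      map_add' := fun f g => rfl
      map_smul' := fun c f => rfl }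
  have key : ∀ g : G, ∃ j : J, g = (j : G) * ((QuotientGroup.mk g⁻¹ : G ⧸ J).out)⁻¹ := by
    intro g
    obtain ⟨h, hh⟩ := QuotientGroup.mk_out_eq_mul J g⁻¹
    refine ⟨h, ?_⟩
    rw [hh]; group
  have hF : Function.Bijective F := by
    constructor
    · rw [injective_iff_map_eq_zero]
      intro f hf
      ext g
      obtain ⟨j, hj⟩ := key g
      have := f.2 j ((QuotientGroup.mk g⁻¹ : G ⧸ J).out)⁻¹
      rw [hj]
      have h2 : f.1 ((QuotientGroup.mk g⁻¹ : G ⧸ J).out)⁻¹ = 0 := congrFun hf _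
      rw [h2, map_zero] at this
      exact this
    · intro h
      choose j hj using key
      refine ⟨⟨fun g => σ (j g) (h (QuotientGroup.mk g⁻¹)), ?_⟩, ?_⟩
      · intro k g
        have h1 : (QuotientGroup.mk (J.subtype k * g)⁻¹ : G ⧸ J) = QuotientGroup.mk g⁻¹ := by
          rw [QuotientGroup.eq]; simp
        have h2 : j (J.subtype k * g) = k * j g := by
          have e1 := hj (J.subtype k * g)
          rw [h1] at e1
          have e2 := hj g
          apply Subtype.ext
          have : (k : G) * g = (j (J.subtype k * g) : G) * (QuotientGroup.mk g⁻¹ : G ⧸ J).out⁻¹ := e1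
          rw [← mul_inv_eq_iff_eq_mul] at e1 e2
          rw [← e1, Subgroup.coe_mul, ← e2]; simp [mul_assoc]
        show σ (j (J.subtype k * g)) (h _) = σ k (σ (j g) (h _))
        rw [h1, h2]; simp
      · funext q
        show σ (j (q.out)⁻¹) (h (QuotientGroup.mk ((q.out)⁻¹)⁻¹)) = h q
        have h1 : (QuotientGroup.mk ((q.out)⁻¹)⁻¹ : G ⧸ J) = q := by simp
        have h2 : j (q.out)⁻¹ = 1 := by
          have := hj (q.out)⁻¹
          rw [h1] at this
          apply Subtype.ext
          simpa using this
        rw [h1, h2]; simp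
  rw [(LinearEquiv.ofBijective F hF).finrank_eq, Module.finrank_pi_fintype]
  simp [Subgroup.index, Nat.card_eq_fintype_card]

/-- The hypothesis no character with `p`-part of the degree in `(1, p^a]`. -/
def StarP (p a : ℕ) (G : Type) [Group G] : Prop :=
  ∀ (V : Type) [AddCommGroup V] [Module ℂ V] [FiniteDimensional ℂ V] (ρ : Representation ℂ G V),
    RIrr ρ → p ∣ finrank ℂ V → p ^ (a + 1) ∣ finrank ℂ V

lemma exists_over {p a : ℕ} (hs : StarP p a G)
    (hd : ¬ p ^ (a + 1) ∣ J.index * finrank ℂ E) :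
    ∃ (V : Type) (_ : AddCommGroup V) (_ : Module ℂ V) (_ : FiniteDimensional ℂ V)
      (ρ : Representation ℂ G V), RIrr ρ ∧ ¬ p ∣ finrank ℂ V ∧
      ∃ T : V →ₗ[ℂ] E, T ≠ 0 ∧ ∀ (j : J) v, T (ρ j v) = σ j (T v) := by
  have : FiniteDimensional ℂ (G → E) := Module.Finite.pi
  let W := Representation.coindV J.subtype σ
  let ρ := Representation.coind J.subtype σ
  obtain ⟨U, -, hU, hU2⟩ := exists_rmin_not_dvd ρ (p ^ (a+1)) ⊤ (fun _ _ _ => trivial)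
    (by rw [finrank_top]; rw [finrank_coind]; exact hd)
  refine ⟨U, inferInstance, inferInstance, inferInstance, subrep ρ U hU.2.1, rmin_irr _ _ hU,
    fun h => hU2 (hs _ _ (rmin_irr _ _ hU) h), ?_⟩
  refine ⟨(LinearMap.proj (R := ℂ) (φ := fun _ : G => E) 1).comp (W.subtype.comp U.subtype), ?_, ?_⟩
  · intro h
    apply hU.1
    rw [eq_bot_iff]
    intro f hf
    rw [Submodule.mem_bot]
    apply Subtype.ext
    funext g
    have h1 := LinearMap.congr_fun h ⟨ρ g f, hU.2.1 g f hf⟩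
    have h2 : (ρ g f).1 1 = 0 := h1
    have h3 : (ρ g f).1 1 = f.1 (1 * g) := rfl
    rw [h3, one_mul] at h2
    exact h2
  · intro j v
    show (ρ j v.1).1 1 = σ j (v.1.1 1)
    have h1 := v.1.2 j 1
    have h3 : (ρ j v.1).1 1 = v.1.1 (1 * j) := rfl
    rw [h3, one_mul]
    rw [mul_one] at h1
    exact h1

end coind

section spectrum

variable {X : Type} [Group X] [Finite X] {V : Type} [AddCommGroup V] [Module ℂ V]
  (τ : Representation ℂ X V)

/-- class sum operator -/
def KK (y : X) : Module.End ℂ V :=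
  letI := Fintype.ofFinite X
  ∑ u : X, τ (u * y * u⁻¹)

/-- joint generalised eigenspaces of the class sums -/
def Spec (ω : X → ℂ) : Submodule ℂ V := ⨅ y, (KK τ y).maxGenEigenspace (ω y)

variable {τ} {W : Type} [AddCommGroup W] [Module ℂ W] {σ : Representation ℂ X W}

lemma KK_map (α : X ≃* X) (T : V →ₗ[ℂ] W) (hT : ∀ x v, T (τ x v) = σ (α x) (T v)) (y : X) (v : V) :
    T (KK τ y v) = KK σ (α y) (T v) := by
  letI := Fintype.ofFinite X
  simp only [KK, LinearMap.sum_apply, map_sum, hT]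
  exact Fintype.sum_equiv α.toEquiv _ _ (fun u => by simp)

lemma spec_map (α : X ≃* X) (T : V →ₗ[ℂ] W) (hT : ∀ x v, T (τ x v) = σ (α x) (T v))
    (ω : X → ℂ) (v : V) (hv : v ∈ Spec τ ω) : T v ∈ Spec σ (fun y => ω (α.symm y)) := by
  rw [Spec, Module.End.mem_iInf_maxGenEigenspace_iff] at hv ⊢
  intro y
  obtain ⟨k, hk⟩ := hv (α.symm y)
  refine ⟨k, ?_⟩
  have key : ∀ (k : ℕ) (w : V), ((KK σ y - ω (α.symm y) • (1 : Module.End ℂ W)) ^ k) (T w) =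
      T (((KK τ (α.symm y) - ω (α.symm y) • (1 : Module.End ℂ V)) ^ k) w) := by
    intro k
    induction k with
    | zero => intro w; simp
    | succ k ih =>
      intro w
      rw [pow_succ, pow_succ, Module.End.mul_apply, Module.End.mul_apply, ← ih]
      congr 1
      simp [KK_map α T hT]
  rw [key, hk, map_zero]

lemma spec_map_one (T : V →ₗ[ℂ] W) (hT : ∀ x v, T (τ x v) = σ x (T v))
    (ω : X → ℂ) (v : V) (hv : v ∈ Spec τ ω) : T v ∈ Spec σ ω :=
  spec_map (MulEquiv.refl X) T hT ω v hv

variable (τ)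

lemma KK_comm_tau (y x : X) : Commute (KK τ y) (τ x) := by
  letI := Fintype.ofFinite X
  rw [Commute, SemiconjBy, KK, Finset.sum_mul, Finset.mul_sum]
  exact Fintype.sum_equiv (Equiv.mulLeft x⁻¹) _ _ (fun u => by
    rw [← map_mul, ← map_mul]; congr 1; simp [mul_assoc])

lemma KK_comm (y z : X) : Commute (KK τ y) (KK τ z) := by
  letI := Fintype.ofFinite X
  conv => arg 2; rw [KK]
  exact Commute.sum_right _ _ _ (fun u _ => KK_comm_tau τ y _)

lemma KK_conj (y u : X) : KK τ (u * y * u⁻¹) = KK τ y := by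
  letI := Fintype.ofFinite X
  rw [KK, KK]
  exact Fintype.sum_equiv (Equiv.mulRight u) _ _ (fun w => by simp [mul_assoc])

lemma spec_indep : iSupIndep (fun ω : X → ℂ => Spec τ ω) :=
  Module.End.independent_iInf_maxGenEigenspace_of_forall_mapsTo _
    (fun i j => Module.End.mapsTo_maxGenEigenspace_of_comm (KK_comm τ j i))

lemma spec_top [FiniteDimensional ℂ V] : ⨆ ω : X → ℂ, Spec τ ω = ⊤ :=
  Module.End.iSup_iInf_maxGenEigenspace_eq_top_of_iSup_maxGenEigenspace_eq_top_of_commute _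
    (fun i j _ => KK_comm τ i j) (fun i => Module.End.iSup_maxGenEigenspace_eq_top _)

lemma spec_finite [FiniteDimensional ℂ V] : {ω : X → ℂ | Spec τ ω ≠ ⊥}.Finite :=
  WellFoundedGT.finite_ne_bot_of_iSupIndep (spec_indep τ)

lemma spec_class (ω : X → ℂ) (h : Spec τ ω ≠ ⊥) (y u : X) : ω (u * y * u⁻¹) = ω y := by
  by_contra hne
  apply h
  rw [eq_bot_iff]
  have h1 : Spec τ ω ≤ (KK τ y).maxGenEigenspace (ω y) := iInf_le _ y
  have h2 : Spec τ ω ≤ (KK τ y).maxGenEigenspace (ω (u * y * u⁻¹)) := by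
    have := iInf_le (fun y => (KK τ y).maxGenEigenspace (ω y)) (u * y * u⁻¹)
    rw [KK_conj] at this
    exact this
  exact (Module.End.disjoint_genEigenspace (KK τ y) hne ⊤ ⊤).le_bot.trans' (le_inf h2 h1)

lemma spec_mapsTo (ω : X → ℂ) (A : Module.End ℂ V) (hA : ∀ y, Commute (KK τ y) A) (v : V)
    (hv : v ∈ Spec τ ω) : A v ∈ Spec τ ω := by
  rw [Spec, Submodule.mem_iInf] at hv ⊢
  intro y
  exact Module.End.mapsTo_maxGenEigenspace_of_comm (hA y) _ (hv y)

lemma spec_inv (ω : X → ℂ) : RInv τ (Spec τ ω) := fun x v hv =>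
  spec_mapsTo τ ω (τ x) (fun y => KK_comm_tau τ y x) v hv

/-- trace on a joint generalised eigenspace -/
lemma spec_trace_mul [FiniteDimensional ℂ V] (ω : X → ℂ) (y : X) (B : Module.End ℂ V)
    (hB : ∀ y, Commute (KK τ y) B) :
    LinearMap.trace ℂ (Spec τ ω)
      ((KK τ y * B).restrict (fun v hv => spec_mapsTo τ ω (KK τ y * B)
        (fun z => (KK_comm τ z y).mul_right (hB z)) v hv)) =
    ω y * LinearMap.trace ℂ (Spec τ ω) (B.restrict (fun v hv => spec_mapsTo τ ω B hB v hv)) := by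
  set b : Module.End ℂ (Spec τ ω) := B.restrict (fun v hv => spec_mapsTo τ ω B hB v hv) with hb
  set k : Module.End ℂ (Spec τ ω) :=
    (KK τ y).restrict (fun v hv => spec_mapsTo τ ω (KK τ y) (fun z => KK_comm τ z y) v hv) with hk
  have h1 : ((KK τ y * B).restrict (fun v hv => spec_mapsTo τ ω (KK τ y * B)
        (fun z => (KK_comm τ z y).mul_right (hB z)) v hv)) = (k - ω y • 1) * b + ω y • b := by
    ext v; simp [hk, hb]
  have hcomm : Commute (k - ω y • 1) b := by
    apply Commute.sub_left
    · ext v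
      have := LinearMap.congr_fun (hB y).eq v
      simpa [hk, hb] using this
    · exact (Commute.one_left b).smul_left _
  have hnil : IsNilpotent (k - ω y • 1) := by
    have h0 : Spec τ ω ≤ (KK τ y).maxGenEigenspace (ω y) := iInf_le _ y
    rw [Module.End.maxGenEigenspace_eq] at h0
    refine ⟨Module.End.maxGenEigenspaceIndex (KK τ y) (ω y), ?_⟩
    ext v
    have h2 := h0 v.2
    rw [Module.End.mem_genEigenspace_nat] at h2
    have key : ∀ (n : ℕ) (v : Spec τ ω), (((k - ω y • (1 : Module.End ℂ (Spec τ ω))) ^ n) v : V) =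
      ((KK τ y - ω y • (1 : Module.End ℂ V)) ^ n) v := by
      intro n
      induction n with
      | zero => intro v; simp
      | succ n ih =>
        intro v
        rw [pow_succ, pow_succ, Module.End.mul_apply, Module.End.mul_apply, ih]
        congr 1
    rw [key]
    exact h2
  have h3 : LinearMap.trace ℂ (Spec τ ω) ((k - ω y • 1) * b) = 0 := by
    have := LinearMap.isNilpotent_trace_of_isNilpotent (hcomm.isNilpotent_mul_right hnil)
    exact this.eq_zero
  rw [h1, map_add, h3, map_smul, zero_add, smul_eq_mul]

lemma spec_trace_two [FiniteDimensional ℂ V] (ω : X → ℂ) (y z : X) :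
    LinearMap.trace ℂ (Spec τ ω)
      ((KK τ y * KK τ z).restrict (fun v hv => spec_mapsTo τ ω (KK τ y * KK τ z)
        (fun w => (KK_comm τ w y).mul_right (KK_comm τ w z)) v hv)) =
    ω y * ω z * (finrank ℂ (Spec τ ω) : ℂ) := by
  rw [spec_trace_mul τ ω y (KK τ z) (fun w => KK_comm τ w z)]
  have h := spec_trace_mul τ ω z 1 (fun w => Commute.one_right _)
  have h1 : (LinearMap.restrict (1 : Module.End ℂ V)
    (fun v hv => spec_mapsTo τ ω 1 (fun w => Commute.one_right _) v hv)) =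
    (1 : Module.End ℂ (Spec τ ω)) := by ext v; rfl
  rw [h1, LinearMap.trace_one] at h
  simp only [mul_one] at h
  rw [h, mul_assoc]

lemma spec_integral [FiniteDimensional ℂ V] (ω : X → ℂ) (h : Spec τ ω ≠ ⊥) (y : X) :
    IsIntegral ℤ (ω y) := by
  letI := Fintype.ofFinite X
  have hfin : Module.Finite ℤ (MonoidAlgebra ℤ X) := by
    infer_instance
  -- the class sum is integral
  have hIntg : IsIntegral ℤ (KK τ y) := by
    let f : MonoidAlgebra ℤ X →ₐ[ℤ] Module.End ℂ V := MonoidAlgebra.lift ℤ _ X τ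
    have h1 : KK τ y = f (∑ u : X, MonoidAlgebra.of ℤ X (u * y * u⁻¹)) := by
      simp [KK, f]
    rw [h1]
    exact (Algebra.IsIntegral.isIntegral _).map f
  have hev : (KK τ y).HasEigenvalue (ω y) := by
    have h0 : Spec τ ω ≤ (KK τ y).maxGenEigenspace (ω y) := iInf_le _ y
    have h2 : (KK τ y).maxGenEigenspace (ω y) ≠ ⊥ := fun h' => h (eq_bot_iff.2 (h' ▸ h0))
    rw [Module.End.maxGenEigenspace_eq] at h2
    exact Module.End.hasEigenvalue_of_hasGenEigenvalue (k := _) h2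
  obtain ⟨v, hv⟩ := hev.exists_hasEigenvector
  obtain ⟨q, hq, hq0⟩ := hIntg
  refine ⟨q, hq, ?_⟩
  have h3 := Module.End.aeval_apply_of_hasEigenvector (p := q.map (algebraMap ℤ ℂ)) hv
  rw [Polynomial.aeval_map_algebraMap] at h3
  rw [← Polynomial.aeval_def] at hq0
  rw [hq0] at h3
  rw [Polynomial.eval_map] at h3
  exact (smul_eq_zero.1 h3.symm).resolve_right hv.2

end spectrum

section orbits

lemma irr_dim {A Ω V : Type} [Group A] [Finite A] [MulAction A Ω] [AddCommGroup V] [Module ℂ V]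
    [FiniteDimensional ℂ V] (ρ : Representation ℂ A V) (hirr : RIrr ρ) (S : Ω → Submodule ℂ V)
    (hind : iSupIndep S) (hS : ∀ a ω v, v ∈ S ω → ρ a v ∈ S (a • ω)) (ω : Ω) (h : S ω ≠ ⊥) :
    finrank ℂ V = (MulAction.stabilizer A ω).index * finrank ℂ (S ω) := by
  have hfin : Finite (MulAction.orbit A ω) := Set.Finite.to_subtype (Set.finite_range _)
  let _ := Fintype.ofFinite (MulAction.orbit A ω)
  let N : MulAction.orbit A ω → Submodule ℂ V := fun i => S i.1
  have hN : iSupIndep N := hind.comp Subtype.val_injective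
  have htop : ⨆ i, N i = ⊤ := by
    rcases hirr.2 (⨆ i, N i) (by
      intro a v hv
      induction hv using Submodule.iSup_induction' with
      | mem i x hx =>
        exact Submodule.mem_iSup_of_mem (p := N) ⟨a • i.1, by
          rw [MulAction.mem_orbit_iff] ; obtain ⟨b, hb⟩ := i.2; exact ⟨a * b, by
            rw [mul_smul]; exact congrArg _ hb⟩⟩ (hS a i.1 x hx)
      | zero => simp
      | add x y _ _ hx hy => rw [map_add]; exact add_mem hx hy) with h1 | h1
    · exfalso
      apply h
      rw [eq_bot_iff, ← h1]
      exact le_iSup N ⟨ω, MulAction.mem_orbit_self ω⟩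
    · exact h1
  have hIntg : DirectSum.IsInternal N :=
    (DirectSum.isInternal_submodule_iff_iSupIndep_and_iSup_eq_top N).2 ⟨hN, htop⟩
  have h1 := (LinearEquiv.ofBijective (DirectSum.coeLinearMap N) hIntg).finrank_eq
  have hle : ∀ (a : A) ω, finrank ℂ (S ω) ≤ finrank ℂ (S (a • ω)) := by
    intro a ω
    apply LinearMap.finrank_le_finrank_of_injective (f := (ρ a).restrict (hS a ω))
    intro x y hxy
    have : ρ a x = ρ a y := congrArg Subtype.val hxy
    have h2 := congrArg (ρ a⁻¹) this
    simpa using h2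
  have h2 : ∀ i, finrank ℂ (N i) = finrank ℂ (S ω) := by
    rintro ⟨_, a, rfl⟩
    apply le_antisymm
    · have := hle a⁻¹ (a • ω)
      rwa [inv_smul_smul] at this
    · exact hle a ω
  rw [← h1, Module.finrank_directSum, Finset.sum_congr rfl (fun i _ => h2 i), Finset.sum_const,
    MulAction.index_stabilizer, smul_eq_mul, Finset.card_univ, ← Nat.card_eq_fintype_card,
    Nat.card_coe_set_eq]

lemma orbit_sum {S Ω : Type} [Group S] [Finite S] {p : ℕ} (hp : p.Prime) (hS : IsPGroup p S)
    [MulAction S Ω] [Fintype Ω] (f : Ω → ℂ) (hf : ∀ (s : S) ω, f (s • ω) = f ω)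
    (hIntg : ∀ ω, IsIntegral ℤ (f ω))
    (hfix : ∀ ω, (∀ s : S, s • ω = ω) → ∃ z, IsIntegral ℤ z ∧ f ω = p * z) :
    ∃ z, IsIntegral ℤ z ∧ ∑ ω, f ω = p * z := by
  have : Fact p.Prime := ⟨hp⟩
  have hfin : Finite (MulAction.orbitRel.Quotient S Ω) := Quotient.finite _
  let _ := Fintype.ofFinite (MulAction.orbitRel.Quotient S Ω)
  rw [← Finset.sum_fiberwise Finset.univ
    (fun ω => (Quotient.mk'' ω : MulAction.orbitRel.Quotient S Ω)) f]
  have key : ∀ q : MulAction.orbitRel.Quotient S Ω, ∃ z, IsIntegral ℤ z ∧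
      ∑ ω with (Quotient.mk'' ω : MulAction.orbitRel.Quotient S Ω) = q, f ω = p * z := by
    intro q
    induction q using Quotient.inductionOn' with
    | h ω =>
    have hmem : ∀ x, (Quotient.mk'' x : MulAction.orbitRel.Quotient S Ω) = Quotient.mk'' ω ↔
        x ∈ MulAction.orbit S ω := by
      intro x
      rw [Quotient.eq'']; exact MulAction.orbitRel_apply
    have h1 : ∑ x with (Quotient.mk'' x : MulAction.orbitRel.Quotient S Ω) = Quotient.mk'' ω, f x
        = (Nat.card (MulAction.orbit S ω) : ℂ) * f ω := by
      rw [Finset.sum_congr rfl (g := fun _ => f ω)]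
      · rw [Finset.sum_const, nsmul_eq_mul]
        congr 2
        rw [Nat.card_coe_set_eq, ← Set.ncard_coe_finset]
        congr 1
        ext x
        simp only [Finset.coe_filter, Finset.mem_univ, true_and, Set.mem_setOf_eq]
        exact hmem x
      · intro x hx
        simp only [Finset.mem_filter, Finset.mem_univ, true_and] at hx
        obtain ⟨s, rfl⟩ := (hmem x).1 hx
        exact hf s ω
    rw [h1]
    obtain ⟨n, hn⟩ := hS.card_orbit ω
    rcases n with _ | n
    · rw [hn]
      obtain ⟨z, hz, hz2⟩ := hfix ω (by
        intro s
        rw [pow_zero, Nat.card_eq_one_iff_unique] at hn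
        obtain ⟨hsub, -⟩ := hn
        have := hsub.elim ⟨s • ω, MulAction.mem_orbit ω s⟩ ⟨ω, MulAction.mem_orbit_self ω⟩
        exact congrArg Subtype.val this)
      exact ⟨z, hz, by simpa using hz2⟩
    · rw [hn]
      refine ⟨((p ^ n : ℕ) : ℂ) * f ω, IsIntegral.mul (isIntegral_natCast _) (hIntg ω), ?_⟩
      push_cast; ring
  choose z hz hz2 using key
  exact ⟨∑ q, z q, IsIntegral.sum _ (fun q _ => hz q), by rw [Finset.mul_sum]; exact Finset.sum_congr rfl (fun q _ => hz2 q)⟩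

lemma not_dvd_of_integral {p n : ℕ} (hp : p.Prime) (z : ℂ) (hz : IsIntegral ℤ z)
    (h : (n : ℂ) = p * z) : p ∣ n := by
  have hp0 : (p : ℂ) ≠ 0 := by exact_mod_cast hp.ne_zero
  have h1 : z = algebraMap ℚ ℂ ((n : ℚ) / p) := by
    have : z = n / p := by rw [h]; field_simp
    rw [this]; simp
  rw [h1, isIntegral_algebraMap_iff (algebraMap ℚ ℂ).injective] at hz
  obtain ⟨k, hk⟩ := IsIntegrallyClosed.isIntegral_iff.1 hz
  have hp1 : (p : ℚ) ≠ 0 := by exact_mod_cast hp.ne_zero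
  have h2 : (n : ℚ) = p * k := by
    have : (k : ℚ) = n / p := by simpa using hk
    rw [this]; field_simp
  have h3 : (n : ℤ) = p * k := by exact_mod_cast h2
  exact Int.natCast_dvd_natCast.1 ⟨k, h3⟩

end orbits

section cf

variable {G : Type} [Group G]

/-- functions on a (normal) subgroup with the conjugation action -/
def CF (X : Subgroup G) : Type := X → ℂ

instance (X : Subgroup G) [X.Normal] : MulAction G (CF X) where
  smul g ω := fun y => ω (MulAut.conjNormal g⁻¹ y)
  one_smul ω := by
    funext y
    show ω (MulAut.conjNormal 1⁻¹ y) = ω y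
    simp
  mul_smul g h ω := by
    funext y
    show ω (MulAut.conjNormal (g * h)⁻¹ y) = ω (MulAut.conjNormal h⁻¹ (MulAut.conjNormal g⁻¹ y))
    rw [mul_inv_rev, map_mul]; rfl

variable (X : Subgroup G) [X.Normal]

lemma cf_smul (g : G) (ω : CF X) (y : X) : (g • ω) y = ω (MulAut.conjNormal g⁻¹ y) := rfl

lemma cf_fix {g : G} {ω : CF X} (h : g • ω = ω) (y : X) : ω (MulAut.conjNormal g y) = ω y := by
  conv_lhs => rw [← h]
  rw [cf_smul, map_inv]; simp

variable {V : Type} [AddCommGroup V] [Module ℂ V]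

/-- restriction of a representation of `G` -/
abbrev resX (ρ : Representation ℂ G V) : Representation ℂ X V := ρ.comp X.subtype

/-- restriction of a representation of a subgroup -/
abbrev resXJ {J : Subgroup G} (hX : X ≤ J) (σ : Representation ℂ J V) : Representation ℂ X V :=
  σ.comp (Subgroup.inclusion hX)

variable [Finite X]

lemma spec_smul (ρ : Representation ℂ G V) (g : G) (ω : CF X) (v : V)
    (hv : v ∈ Spec (resX X ρ) ω) : ρ g v ∈ Spec (resX X ρ) (g • ω : CF X) := by
  have := spec_map (τ := resX X ρ) (σ := resX X ρ) (MulAut.conjNormal g) (ρ g) (by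
    intro x v
    simp [← Module.End.mul_apply, ← map_mul]) ω v hv
  have h2 : (g • ω : CF X) = fun y => ω ((MulAut.conjNormal g : MulAut X).symm y) := by
    funext y
    rw [cf_smul, map_inv]; rfl
  rw [h2]; exact this

lemma spec_smul_sub {J : Subgroup G} (hX : X ≤ J) (σ : Representation ℂ J V) (g : J) (ω : CF X)
    (v : V) (hv : v ∈ Spec (resXJ X hX σ) ω) :
    σ g v ∈ Spec (resXJ X hX σ) (g • ω : CF X) := by
  have := spec_map (τ := resXJ X hX σ) (σ := resXJ X hX σ) (MulAut.conjNormal (g : G)) (σ g) (by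
    intro x v
    have h1 : g * Subgroup.inclusion hX x =
      Subgroup.inclusion hX (MulAut.conjNormal (g : G) x) * g := by
      apply Subtype.ext
      simp
    show σ g (σ (Subgroup.inclusion hX x) v) =
      σ (Subgroup.inclusion hX (MulAut.conjNormal (g : G) x)) (σ g v)
    rw [← Module.End.mul_apply, ← map_mul, h1, map_mul]; rfl) ω v hv
  have h2 : (g • ω : CF X) = fun y => ω ((MulAut.conjNormal (g : G) : MulAut X).symm y) := by
    funext y
    show ω _ = _
    rw [map_inv]; rfl
  rw [h2]; exact this

lemma spec_fix_inv {J : Subgroup G} (hX : X ≤ J) (σ : Representation ℂ J V) (ω : CF X)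
    (h : ∀ j : J, (j : G) • ω = ω) : RInv σ (Spec (resXJ X hX σ) ω) := by
  intro j v hv
  have := spec_smul_sub X hX σ j ω v hv
  have h2 : j • ω = ω := h j
  rwa [h2] at this

lemma exists_sylow_between [Finite G] {p : ℕ} (hp : p.Prime) (H S : Subgroup G) (hS : IsPGroup p S)
    (hSH : S ≤ H) (hi : ¬ p ∣ H.index) : ∃ R : Sylow p G, S ≤ R.1 ∧ R.1 ≤ H := by
  have : Fact p.Prime := ⟨hp⟩
  have h1 : IsPGroup p (S.subgroupOf H) := hS.comap_of_injective _ H.subtype_injective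
  obtain ⟨Q, hQ⟩ := h1.exists_le_sylow
  have hcard : Nat.card (Q.1.map H.subtype) = p ^ (Nat.card G).factorization p := by
    rw [Subgroup.card_map_of_injective H.subtype_injective]
    have h2 := Q.card_eq_multiplicity
    have h3 : Nat.card G = Nat.card H * H.index := H.card_mul_index.symm
    rw [h3, Nat.factorization_mul Nat.card_pos.ne' (by exact H.index_ne_zero_of_finite)]
    rw [Finsupp.add_apply, Nat.factorization_eq_zero_of_not_dvd hi, add_zero]
    exact h2
  refine ⟨Sylow.ofCard _ hcard, ?_, ?_⟩
  · intro s hs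
    show s ∈ Q.1.map H.subtype
    exact ⟨⟨s, hSH hs⟩, hQ hs, rfl⟩
  · show Q.1.map H.subtype ≤ H
    exact Subgroup.map_subtype_le _

lemma b_two [Finite G] [FiniteDimensional ℂ V] {p : ℕ} (hp : p.Prime)
    (ρ : Representation ℂ G V) (hirr : RIrr ρ) (hdim : ¬ p ∣ finrank ℂ V) (ω : CF X)
    (hω : Spec (resX X ρ) ω ≠ ⊥) (S : Subgroup G) (hS : IsPGroup p S)
    (hSω : ∀ s ∈ S, s • ω = ω) :
    ¬ p ∣ finrank ℂ (Spec (resX X ρ) ω) ∧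
    ∃ R : Sylow p G, S ≤ R.1 ∧ ∀ r ∈ R.1, r • ω = ω := by
  have h := irr_dim ρ hirr (fun ω : CF X => Spec (resX X ρ) ω) (spec_indep _)
    (fun g ω v hv => spec_smul X ρ g ω v hv) ω hω
  refine ⟨fun h' => hdim (h ▸ Dvd.dvd.mul_left h' _), ?_⟩
  obtain ⟨R, h1, h2⟩ := exists_sylow_between hp (MulAction.stabilizer G ω) S hS
    (fun s hs => hSω s hs) (fun h' => hdim (h ▸ Dvd.dvd.mul_right h' _))
  exact ⟨R, h1, fun r hr => h2 hr⟩

end cf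

section step_zero

open scoped commutatorElement

/-- permutation representation on functions -/
def permRep (A Ω : Type) [Group A] [MulAction A Ω] : Representation ℂ A (Ω → ℂ) where
  toFun g :=
    { toFun := fun f q => f (g⁻¹ • q)
      map_add' := fun _ _ => rfl
      map_smul' := fun _ _ => rfl }
  map_one' := by ext; simp
  map_mul' g h := by
    apply LinearMap.ext
    intro f
    funext q
    show f ((g * h)⁻¹ • q) = f (h⁻¹ • g⁻¹ • q)
    rw [mul_inv_rev, mul_smul]

lemma permRep_apply {A Ω : Type} [Group A] [MulAction A Ω] (g : A) (f : Ω → ℂ) (q : Ω) :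
    permRep A Ω g f q = f (g⁻¹ • q) := rfl

/-- every irreducible representation is linear or has dimension at least `N` -/
def MinDeg (N : ℕ) (P : Type) [Group P] : Prop :=
  ∀ (V : Type) [AddCommGroup V] [Module ℂ V] [FiniteDimensional ℂ V] (ρ : Representation ℂ P V),
    RIrr ρ → finrank ℂ V = 1 ∨ N ≤ finrank ℂ V

lemma end_comm_of_one {V : Type} [AddCommGroup V] [Module ℂ V] (h : finrank ℂ V = 1)
    (A B : Module.End ℂ V) : A * B = B * A := by
  obtain ⟨v, hv, hv2⟩ := finrank_eq_one_iff'.1 h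
  ext w
  obtain ⟨c, rfl⟩ := hv2 w
  obtain ⟨α, hα⟩ := hv2 (A v)
  obtain ⟨β, hβ⟩ := hv2 (B v)
  rw [map_smul, map_smul, Module.End.mul_apply, Module.End.mul_apply, ← hα, ← hβ, map_smul,
    map_smul, ← hα, ← hβ, smul_comm α β]

lemma commutator_trivial_of_one {P V : Type} [Group P] [AddCommGroup V] [Module ℂ V]
    (h : finrank ℂ V = 1) (ρ : Representation ℂ P V) (c : P) (hc : c ∈ commutator P) : ρ c = 1 := by
  have : commutator P ≤ MonoidHom.ker (ρ : P →* Module.End ℂ V) := by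
    rw [commutator_def, Subgroup.commutator_le]
    intro a _ b _
    rw [MonoidHom.mem_ker, commutatorElement_def, map_mul, map_mul, map_mul,
      end_comm_of_one h (ρ a) (ρ b), mul_assoc (ρ b), ← map_mul, mul_inv_cancel, map_one, mul_one,
      ← map_mul, mul_inv_cancel, map_one]
  exact this hc

lemma step_zero {P : Type} [Group P] [Finite P] {N : ℕ} (hN : MinDeg N P) (S : Subgroup P)
    (hS : S.index ≤ N) : commutator P ≤ S := by
  by_cases hST : S.index = 1
  · rw [Subgroup.index_eq_one] at hST; rw [hST]; exact le_top
  let _ := Fintype.ofFinite (P ⧸ S)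
  let ρ := permRep P (P ⧸ S)
  have hdim : finrank ℂ ((P ⧸ S) → ℂ) = S.index := by
    rw [Module.finrank_fintype_fun_eq_card, Subgroup.index, Nat.card_eq_fintype_card]
  let F : Submodule ℂ ((P ⧸ S) → ℂ) :=
    { carrier := {v | ∀ c ∈ commutator P, ρ c v = v}
      add_mem' := fun {a b} ha hb c hc => by rw [map_add, ha c hc, hb c hc]
      zero_mem' := fun c _ => map_zero _
      smul_mem' := fun r v hv c hc => by rw [map_smul, hv c hc] }
  have hF : RInv ρ F := by
    intro g v hv c hc
    have h1 : g⁻¹ * c * g ∈ commutator P := by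
      have := (inferInstance : (commutator P).Normal).conj_mem c hc g⁻¹
      simpa using this
    have h2 := hv _ h1
    have h3 : c * g = g * (g⁻¹ * c * g) := by group
    rw [← Module.End.mul_apply, ← map_mul, h3, map_mul, Module.End.mul_apply, h2]
  obtain ⟨C, hC, hFC⟩ := maschke_compl ρ F hF
  have hCbot : C = ⊥ := by
    by_contra hne
    obtain ⟨U, hUC, hU⟩ := exists_rmin ρ C hC hne
    rcases hN _ _ (rmin_irr ρ U hU) with h1 | h1
    · have h2 : U ≤ F := by
        intro v hv c hc
        have := commutator_trivial_of_one h1 (subrep ρ U hU.2.1) c hc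
        exact congrArg Subtype.val (LinearMap.congr_fun this ⟨v, hv⟩)
      exact hU.1 (eq_bot_iff.2 ((le_inf h2 hUC).trans hFC.inf_eq_bot.le))
    · have h2 : U = ⊤ := by
        apply Submodule.eq_top_of_finrank_eq
        apply le_antisymm (Submodule.finrank_le U)
        omega
      have hCt : C = ⊤ := eq_top_iff.2 (h2 ▸ hUC)
      have hFb : F = ⊥ := by
        have := hFC.inf_eq_bot
        rwa [hCt, inf_top_eq] at this
      have hw : (fun _ => 1 : (P ⧸ S) → ℂ) ∈ F := by
        intro c _
        rfl
      rw [hFb, Submodule.mem_bot] at hw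
      have h3 := congrFun hw (QuotientGroup.mk 1)
      exact one_ne_zero h3
  have hFtop : F = ⊤ := by
    have := hFC.sup_eq_top
    rwa [hCbot, sup_bot_eq] at this
  intro c hc
  have h1 : (Pi.single (QuotientGroup.mk 1 : P ⧸ S) (1 : ℂ)) ∈ F := by rw [hFtop]; trivial
  have h2 := congrFun (h1 c hc) (QuotientGroup.mk c)
  rw [permRep_apply] at h2
  have h3 : c⁻¹ • (QuotientGroup.mk c : P ⧸ S) = QuotientGroup.mk 1 := by
    show (QuotientGroup.mk (c⁻¹ * c) : P ⧸ S) = _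
    simp
  rw [h3, Pi.single_eq_same] at h2
  have h4 : (QuotientGroup.mk c : P ⧸ S) = QuotientGroup.mk 1 := by
    by_contra hne
    rw [Pi.single_eq_of_ne hne] at h2
    exact one_ne_zero h2
  rw [QuotientGroup.eq] at h4
  simpa using h4

/-- subgroups of small index in a Sylow subgroup are normalized -/
lemma step_zero_norm {G : Type} [Group G] [Finite G] {N : ℕ} (R S : Subgroup G) (hN : MinDeg N R)
    (hSR : S ≤ R) (hS : S.relIndex R ≤ N) : R ≤ Subgroup.normalizer (S : Set G) := by
  have h := step_zero hN (S.subgroupOf R) hS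
  have hn : (S.subgroupOf R).Normal := by
    constructor
    intro n hn g
    have : g * n * g⁻¹ = ⁅g, n⁆ * n := by simp [commutatorElement_def]
    rw [this]
    refine mul_mem (h ?_) hn
    rw [commutator_def]
    exact Subgroup.commutator_mem_commutator (Subgroup.mem_top _) (Subgroup.mem_top _)
  rwa [Subgroup.normal_subgroupOf_iff_le_normalizer hSR] at hn

lemma mindeg_equiv {N : ℕ} {P Q : Type} [Group P] [Group Q] (e : P ≃* Q) (h : MinDeg N P) :
    MinDeg N Q := by
  intro V _ _ _ ρ hρ
  refine h V (ρ.comp e.toMonoidHom) ⟨hρ.1, fun U hU => hρ.2 U (fun g v hv => ?_)⟩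
  have := hU (e.symm g) v hv
  simpa using this

lemma mindeg_sylow {G : Type} [Group G] [Finite G] {N p : ℕ} [Fact p.Prime] (P R : Sylow p G)
    (h : MinDeg N P.1) : MinDeg N R.1 := mindeg_equiv (P.equiv R) h

end step_zero

section class_lemma

open scoped Pointwise in
lemma sylow_conj {J : Type} [Group J] [Finite J] {p : ℕ} [Fact p.Prime] (Q R : Sylow p J) :
    ∃ g : J, ∀ z, z ∈ R.1 ↔ g⁻¹ * z * g ∈ Q.1 := by
  obtain ⟨g, hg⟩ := MulAction.exists_smul_eq J Q R
  refine ⟨g, fun z => ?_⟩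
  rw [← hg]
  show z ∈ (MulAut.conj g) • Q.1 ↔ _
  rw [Subgroup.mem_pointwise_smul_iff_inv_smul_mem]
  simp [MulAut.smul_def, mul_assoc]

lemma index_dvd_card_of_sup {J : Type} [Group J] [Finite J] (X H : Subgroup J) [X.Normal]
    (h : H ⊔ X = ⊤) : H.index ∣ Nat.card X := by
  have h1 : X.relIndex H = X.index := by
    rw [← Subgroup.relIndex_sup_right, h, Subgroup.relIndex_top_right]
  have h2 : Nat.card H = Nat.card (X.subgroupOf H) * X.relIndex H :=
    (Subgroup.card_mul_index _).symm
  have h3 := H.card_mul_index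
  have h4 := X.card_mul_index
  have h5 : 0 < X.index := Nat.pos_of_ne_zero X.index_ne_zero_of_finite
  refine ⟨Nat.card (X.subgroupOf H), ?_⟩
  apply Nat.eq_of_mul_eq_mul_right h5
  rw [h4, ← h3, h2, h1]; ring

lemma class_one {J : Type} [Group J] [Finite J] {p : ℕ} (hp : p.Prime) (X Q S : Subgroup J)
    [X.Normal] (hX : ¬ p ∣ Nat.card X) (hQ : IsPGroup p Q) (hXQ : Q ⊔ X = ⊤) (hSQ : S ≤ Q)
    (c : J) (hcS : ∀ s ∈ S, s * c = c * s)
    (hconj : ∀ q ∈ Q, ∃ u ∈ X, q * c * q⁻¹ = u * c * u⁻¹) :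
    ∃ x ∈ X, (∀ s ∈ S, x * s = s * x) ∧ ∀ q ∈ Q, q * (x⁻¹ * c * x) = (x⁻¹ * c * x) * q := by
  have : Fact p.Prime := ⟨hp⟩
  let H : Subgroup J := Subgroup.centralizer {c}
  have hH : ∀ z, z ∈ H ↔ c * z = z * c := fun z => by
    rw [Subgroup.mem_centralizer_iff]; simp
  have hHX : H ⊔ X = ⊤ := by
    rw [eq_top_iff, ← hXQ]
    apply sup_le _ le_sup_right
    intro q hq
    obtain ⟨u, hu, hq2⟩ := hconj q hq
    have : u⁻¹ * q ∈ H := by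
      rw [hH]
      have h1 : q * c = u * c * u⁻¹ * q := by rw [← hq2]; group
      rw [mul_assoc u⁻¹, h1]; group
    have h2 : q = u * (u⁻¹ * q) := by group
    rw [h2]
    exact mul_mem (le_sup_right (a := H) hu) (le_sup_left (b := X) this)
  have hHi : ¬ p ∣ H.index := fun h => hX (h.trans (index_dvd_card_of_sup X H hHX))
  have hQi : ¬ p ∣ Q.index := fun h => hX (h.trans (index_dvd_card_of_sup X Q hXQ))
  obtain ⟨R, hSR, hRH⟩ := exists_sylow_between hp H S (hQ.to_le hSQ)
    (fun s hs => (hH s).2 (hcS s hs).symm) hHi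
  let Qs : Sylow p J := hQ.toSylow hQi
  obtain ⟨g, hg⟩ := sylow_conj Qs R
  have hg2 : g ∈ X ⊔ Q := by rw [sup_comm, hXQ]; trivial
  obtain ⟨x, hx, q, hq, rfl⟩ := Subgroup.mem_sup_of_normal_left.1 hg2
  have hmem : ∀ z, z ∈ R.1 ↔ (x * q)⁻¹ * z * (x * q) ∈ Q := hg
  have hmem2 : ∀ z, z ∈ R.1 ↔ x⁻¹ * z * x ∈ Q := by
    intro z
    rw [hmem]
    have : (x * q)⁻¹ * z * (x * q) = q⁻¹ * (x⁻¹ * z * x) * q := by group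
    rw [this]
    constructor
    · intro h
      have := mul_mem (mul_mem hq h) (inv_mem hq)
      simpa [mul_assoc] using this
    · intro h
      exact mul_mem (mul_mem (inv_mem hq) h) hq
  have hXQ0 : ∀ z, z ∈ X → z ∈ Q → z = 1 := by
    intro z hz hzQ
    have h1 : IsPGroup p (X ⊓ Q : Subgroup J) := hQ.to_le inf_le_right
    have h2 : X ⊓ Q = ⊥ := by
      obtain ⟨n, hn⟩ := IsPGroup.iff_card.1 h1
      rcases n with _ | n
      · exact Subgroup.card_eq_one.1 (by simpa using hn)
      · exfalso
        apply hX
        have h3 : Nat.card (X ⊓ Q : Subgroup J) ∣ Nat.card X := Subgroup.card_dvd_of_le inf_le_left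
        rw [hn] at h3
        exact (dvd_pow_self p (Nat.succ_ne_zero n)).trans h3
    have h3 : z ∈ X ⊓ Q := ⟨hz, hzQ⟩
    rw [h2] at h3
    exact h3
  refine ⟨x, hx, ?_, ?_⟩
  · intro s hs
    have h1 := (hmem2 s).1 (hSR hs)
    have h2 : x⁻¹ * s * x * s⁻¹ ∈ Q := mul_mem h1 (inv_mem (hSQ hs))
    have h3 : x⁻¹ * (s * x * s⁻¹) ∈ X :=
      mul_mem (inv_mem hx) ((inferInstance : X.Normal).conj_mem x hx s)
    have h4 := hXQ0 (x⁻¹ * s * x * s⁻¹) (by simpa [mul_assoc] using h3) h2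
    have h5 : x * (x⁻¹ * s * x * s⁻¹) * s = s * x := by group
    rw [h4] at h5
    simpa using h5
  · intro q' hq'
    have h1 : x * q' * x⁻¹ ∈ R.1 := by rw [hmem2]; simpa [mul_assoc] using hq'
    have h2 := (hH _).1 (hRH h1)
    have h3 : x⁻¹ * (c * (x * q' * x⁻¹)) * x = x⁻¹ * ((x * q' * x⁻¹) * c) * x := by rw [h2]
    have h4 : x⁻¹ * (c * (x * q' * x⁻¹)) * x = (x⁻¹ * c * x) * q' := by group
    have h5 : x⁻¹ * ((x * q' * x⁻¹) * c) * x = q' * (x⁻¹ * c * x) := by group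
    rw [← h4, ← h5, h3]

/-- conjugates of a proper subgroup do not cover a finite group -/
lemma eq_top_of_conj_cover {C : Type} [Group C] [Finite C] (D : Subgroup C)
    (h : ∀ c : C, ∃ x : C, x⁻¹ * c * x ∈ D) : D = ⊤ := by
  let _ := Fintype.ofFinite C
  let _ := Fintype.ofFinite (C ⧸ D)
  let _ : Fintype (MulAction.orbitRel.Quotient C (C ⧸ D)) :=
    @Fintype.ofFinite _ (Quotient.finite _)
  let _ : ∀ a : C, Fintype (MulAction.fixedBy (C ⧸ D) a) := fun a => Fintype.ofFinite _
  have h1 := MulAction.sum_card_fixedBy_eq_card_orbits_mul_card_group C (C ⧸ D)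
  have h2 : Fintype.card (MulAction.orbitRel.Quotient C (C ⧸ D)) ≤ 1 := by
    rw [Fintype.card_le_one_iff_subsingleton]
    exact (MulAction.pretransitive_iff_subsingleton_quotient C (C ⧸ D)).1 inferInstance
  have h3 : ∀ a : C, 1 ≤ Fintype.card (MulAction.fixedBy (C ⧸ D) a) := by
    intro a
    obtain ⟨x, hx⟩ := h a
    refine Fintype.card_pos_iff.2 ⟨⟨(QuotientGroup.mk x : C ⧸ D), ?_⟩⟩
    show (QuotientGroup.mk (a * x) : C ⧸ D) = QuotientGroup.mk x
    rw [eq_comm, QuotientGroup.eq]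
    simpa [mul_assoc] using hx
  have h4 : Fintype.card (MulAction.fixedBy (C ⧸ D) (1 : C)) = D.index := by
    rw [Subgroup.index, ← Nat.card_eq_fintype_card]
    have : MulAction.fixedBy (C ⧸ D) (1 : C) = Set.univ := by
      ext q; simp
    rw [this]; simp
  have h5 : ∑ a : C, Fintype.card (MulAction.fixedBy (C ⧸ D) a) ≤ ∑ a : C, 1 := by
    rw [h1]; simp
    calc _ ≤ 1 * Fintype.card C := Nat.mul_le_mul_right _ h2
      _ = _ := one_mul _
  have h6 := (Finset.sum_eq_sum_iff_of_le (fun a _ => h3 a)).1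
    (le_antisymm (Finset.sum_le_sum (fun a _ => h3 a)) h5) 1 (Finset.mem_univ _)
  rw [h4] at h6
  exact Subgroup.index_eq_one.1 h6.symm

lemma class_two {G : Type} [Group G] [Finite G] {p : ℕ} (hp : p.Prime) (X S B : Subgroup G)
    [X.Normal] (hX : ¬ p ∣ Nat.card X) (hQ : IsPGroup p (S ⊔ B : Subgroup G))
    (l : G) (hl : l ∈ X) (hlS : ∀ s ∈ S, l * s = s * l) (b₀ : G) (hb₀ : b₀ ∈ B)
    (hne : b₀ * l ≠ l * b₀) :
    ∃ c ∈ X, (∀ s ∈ S, s * c = c * s) ∧ ∃ b ∈ B, ∀ u ∈ X, b * c * b⁻¹ ≠ u * c * u⁻¹ := by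
  by_contra hcon
  push Not at hcon
  have key : ∀ c ∈ X, (∀ s ∈ S, s * c = c * s) → ∃ x ∈ X, (∀ s ∈ S, x * s = s * x) ∧
      ∀ q ∈ S ⊔ B, q * (x⁻¹ * c * x) = (x⁻¹ * c * x) * q := by
    intro c hc hcS
    have hQ2 : S ⊔ B ≤ X ⊔ Subgroup.centralizer {c} := by
      apply sup_le
      · intro s hs
        apply le_sup_right (a := X)
        rw [Subgroup.mem_centralizer_iff]
        simpa using (hcS s hs).symm
      · intro b hb
        obtain ⟨u, hu, hbu⟩ := hcon c hc hcS b hb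
        have h1 : u⁻¹ * b ∈ Subgroup.centralizer {c} := by
          rw [Subgroup.mem_centralizer_iff]
          simp only [Set.mem_singleton_iff, forall_eq]
          have h1 : b * c = u * c * u⁻¹ * b := by rw [← hbu]; group
          rw [mul_assoc u⁻¹, h1]; group
        have h2 : b = u * (u⁻¹ * b) := by group
        rw [h2]
        exact mul_mem (le_sup_left (a := X) hu) (le_sup_right (a := X) h1)
    let J : Subgroup G := (S ⊔ B) ⊔ X
    have hSJ : S ≤ J := le_sup_left.trans le_sup_left
    have hXJ : X ≤ J := le_sup_right
    have hQJ : S ⊔ B ≤ J := le_sup_left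
    have hXn : (X.subgroupOf J).Normal := inferInstance
    obtain ⟨x, hx, h1, h2⟩ := class_one hp (X.subgroupOf J) ((S ⊔ B).subgroupOf J) (S.subgroupOf J)
      (by
        intro h; apply hX
        rwa [Nat.card_congr (Subgroup.subgroupOfEquivOfLe hXJ).toEquiv] at h)
      (hQ.comap_of_injective _ J.subtype_injective)
      (by
        rw [← Subgroup.subgroupOf_sup hQJ hXJ]
        exact Subgroup.subgroupOf_self J)
      (fun z hz => le_sup_left (b := B) hz)
      ⟨c, hXJ hc⟩ (by
        rintro ⟨s, hs'⟩ hs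
        exact Subtype.ext (hcS s hs))
      (by
        rintro ⟨q, hq'⟩ hq
        have hq2 : q ∈ X ⊔ Subgroup.centralizer {c} := hQ2 hq
        obtain ⟨u, hu, z, hz, rfl⟩ := Subgroup.mem_sup_of_normal_left.1 hq2
        refine ⟨⟨u, hXJ hu⟩, hu, Subtype.ext ?_⟩
        show u * z * c * (u * z)⁻¹ = u * c * u⁻¹
        rw [Subgroup.mem_centralizer_iff] at hz
        have h3 : c * z = z * c := hz c rfl
        rw [mul_assoc u z c, ← h3]; group)
    refine ⟨x, hx, fun s hs => ?_, fun q hq => ?_⟩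
    · exact congrArg Subtype.val (h1 ⟨s, hSJ hs⟩ hs)
    · exact congrArg Subtype.val (h2 ⟨q, hQJ hq⟩ hq)
  let C : Subgroup G := X ⊓ Subgroup.centralizer (S : Set G)
  let D : Subgroup G := X ⊓ Subgroup.centralizer ((S ⊔ B : Subgroup G) : Set G)
  have hD := eq_top_of_conj_cover (D.subgroupOf C) (by
    rintro ⟨c, hc1, hc2⟩
    replace hc1 : c ∈ X := hc1
    replace hc2 := Subgroup.mem_centralizer_iff.1 hc2
    obtain ⟨x, hx, h1, h2⟩ := key c hc1 hc2
    refine ⟨⟨x, hx, ?_⟩, ?_, ?_⟩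
    · apply Subgroup.mem_centralizer_iff.2
      exact fun s hs => (h1 s hs).symm
    · exact X.mul_mem (X.mul_mem (X.inv_mem hx) hc1) hx
    · apply Subgroup.mem_centralizer_iff.2
      exact fun q hq => h2 q hq)
  have hlC : l ∈ C := ⟨hl, by
    apply Subgroup.mem_centralizer_iff.2; exact fun s hs => (hlS s hs).symm⟩
  have hlD : (⟨l, hlC⟩ : C) ∈ D.subgroupOf C := by rw [hD]; trivial
  have h3 : l ∈ D := hlD
  have h4 := Subgroup.mem_centralizer_iff.1 h3.2
  exact hne (h4 b₀ (le_sup_right (a := S) hb₀))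

end class_lemma

section lemma_z

lemma permRep_trace {A Ω : Type} [Group A] [MulAction A Ω] [Fintype Ω] (g : A) :
    LinearMap.trace ℂ (Ω → ℂ) (permRep A Ω g) = ∑ q : Ω, if g⁻¹ • q = q then (1 : ℂ) else 0 := by
  rw [LinearMap.trace_eq_matrix_trace ℂ (Pi.basisFun ℂ Ω), Matrix.trace]
  refine Finset.sum_congr rfl (fun q _ => ?_)
  rw [Matrix.diag_apply, LinearMap.toMatrix_apply, Pi.basisFun_apply, Pi.basisFun_repr,
    permRep_apply, Pi.single_apply]

lemma trace_KK_mul {X V : Type} [Group X] [Fintype X] [AddCommGroup V] [Module ℂ V]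
    [FiniteDimensional ℂ V] (τ : Representation ℂ X V) (c d : X) :
    LinearMap.trace ℂ V (KK τ c * KK τ d) =
      (Nat.card X : ℂ) * ∑ u : X, LinearMap.trace ℂ V (τ (u * c * u⁻¹ * d)) := by
  have h1 : ∀ w : X, LinearMap.trace ℂ V (KK τ c * τ (w * d * w⁻¹)) =
      LinearMap.trace ℂ V (KK τ c * τ d) := by
    intro w
    have h2 : KK τ c * τ (w * d * w⁻¹) = τ w * (KK τ c * τ d * τ w⁻¹) := by
      rw [map_mul, map_mul, ← mul_assoc, ← mul_assoc, (KK_comm_tau τ c w).eq]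
      simp only [mul_assoc]
    rw [h2, LinearMap.trace_mul_comm, mul_assoc, ← map_mul τ, inv_mul_cancel, map_one, mul_one]
  have h3 : KK τ d = ∑ w : X, τ (w * d * w⁻¹) := by
    rw [KK]; congr!
  have h4 : KK τ c = ∑ w : X, τ (w * c * w⁻¹) := by
    rw [KK]; congr!
  rw [h3, Finset.mul_sum, map_sum, Finset.sum_congr rfl (fun w _ => h1 w), Finset.sum_const, h4,
    Finset.sum_mul, map_sum, nsmul_eq_mul, Finset.card_univ, Nat.card_eq_fintype_card]
  congr 1
  refine Finset.sum_congr rfl (fun u _ => ?_)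
  rw [← map_mul]

lemma trace_KK_spec {X V : Type} [Group X] [Finite X] [AddCommGroup V] [Module ℂ V]
    [FiniteDimensional ℂ V] (τ : Representation ℂ X V) (c d : X) :
    LinearMap.trace ℂ V (KK τ c * KK τ d) =
      ∑ ω ∈ (spec_finite τ).toFinset, ω c * ω d * (finrank ℂ (Spec τ ω) : ℂ) := by
  have hIntg : DirectSum.IsInternal (fun ω : X → ℂ => Spec τ ω) :=
    (DirectSum.isInternal_submodule_iff_iSupIndep_and_iSup_eq_top _).2 ⟨spec_indep τ, spec_top τ⟩
  rw [LinearMap.trace_eq_sum_trace_restrict' hIntg (spec_finite τ)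
    (fun ω v hv => spec_mapsTo τ ω (KK τ c * KK τ d)
        (fun w => (KK_comm τ w c).mul_right (KK_comm τ w d)) v hv)]
  exact Finset.sum_congr rfl (fun ω _ => spec_trace_two τ ω c d)

lemma finrank_spec_smul {G : Type} [Group G] (X : Subgroup G) [X.Normal] [Finite X]
    {J : Subgroup G} (hX : X ≤ J) {V : Type} [AddCommGroup V] [Module ℂ V] [FiniteDimensional ℂ V]
    (σ : Representation ℂ J V) (g : J) (ω : CF X) :
    finrank ℂ (Spec (resXJ X hX σ) (g • ω : CF X)) = finrank ℂ (Spec (resXJ X hX σ) ω) := by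
  have hle : ∀ (a : J) (ω : CF X), finrank ℂ (Spec (resXJ X hX σ) ω) ≤
      finrank ℂ (Spec (resXJ X hX σ) (a • ω : CF X)) := by
    intro a ω
    apply LinearMap.finrank_le_finrank_of_injective
      (f := (σ a).restrict (spec_smul_sub X hX σ a ω))
    intro x y hxy
    have : σ a x = σ a y := congrArg Subtype.val hxy
    have h2 := congrArg (σ a⁻¹) this
    simpa using h2
  apply le_antisymm _ (hle g ω)
  have := hle g⁻¹ (g • ω)
  rwa [inv_smul_smul] at this

lemma lemma_z {G : Type} [Group G] [Finite G] {p : ℕ} (hp : p.Prime) (X S : Subgroup G)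
    [X.Normal] (hX : ¬ p ∣ Nat.card X) (hS : IsPGroup p S) (c c' : X)
    (hc : ∀ s ∈ S, s * (c : G) = c * s) (hc' : ∀ s ∈ S, s * (c' : G) = c' * s)
    (hncj : ∀ u : X, c ≠ u * c' * u⁻¹) (J : Subgroup G) (hXJ : X ≤ J) (hSJ : S ≤ J)
    (hJ : J = X ⊔ S) :
    ∃ (E : Type) (_ : AddCommGroup E) (_ : Module ℂ E) (_ : FiniteDimensional ℂ E)
      (σ : Representation ℂ J E) (ω : CF X), ¬ p ∣ finrank ℂ (Spec (resXJ X hXJ σ) ω) ∧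
      (∀ s ∈ S, s • ω = ω) ∧ ω c ≠ ω c' := by
  have : Fact p.Prime := ⟨hp⟩
  let _ := Fintype.ofFinite X
  let _ := Fintype.ofFinite (J ⧸ S.subgroupOf J)
  let Ω := J ⧸ S.subgroupOf J
  let σ := permRep J Ω
  let τ := resXJ X hXJ σ
  refine ⟨Ω → ℂ, inferInstance, inferInstance, inferInstance, σ, ?_⟩
  by_contra hcon
  push Not at hcon
  have hXS : ∀ z, z ∈ X → z ∈ S → z = 1 := by
    intro z hz hzS
    have h2 : X ⊓ S = ⊥ := by
      obtain ⟨n, hn⟩ := IsPGroup.iff_card.1 (hS.to_le (inf_le_right : X ⊓ S ≤ S))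
      rcases n with _ | n
      · exact Subgroup.card_eq_one.1 (by simpa using hn)
      · exfalso
        apply hX
        have h3 : Nat.card (X ⊓ S : Subgroup G) ∣ Nat.card X := Subgroup.card_dvd_of_le inf_le_left
        rw [hn] at h3
        exact (dvd_pow_self p (Nat.succ_ne_zero n)).trans h3
    have h3 : z ∈ X ⊓ S := ⟨hz, hzS⟩
    rw [h2] at h3
    exact h3
  -- the permutation character
  have ht : ∀ y : X, LinearMap.trace ℂ (Ω → ℂ) (τ y) = if y = 1 then (Nat.card Ω : ℂ) else 0 := by
    intro y
    have h1 := permRep_trace (Ω := Ω) (Subgroup.inclusion hXJ y)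
    have h0 : LinearMap.trace ℂ (Ω → ℂ) (τ y) =
      LinearMap.trace ℂ (Ω → ℂ) (permRep J Ω (Subgroup.inclusion hXJ y)) := rfl
    rw [h0, h1]
    split_ifs with hy
    · subst hy; simp [Nat.card_eq_fintype_card]
    · apply Finset.sum_eq_zero
      intro q _
      rw [if_neg]
      intro hq
      induction q using QuotientGroup.induction_on with
      | H j =>
      have h2 : (QuotientGroup.mk ((Subgroup.inclusion hXJ y)⁻¹ * j) : Ω) = QuotientGroup.mk j := hq
      rw [QuotientGroup.eq] at h2
      have h3 : (j : G)⁻¹ * y * j ∈ S := by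
        have h4 : (((Subgroup.inclusion hXJ y)⁻¹ * j)⁻¹ * j : G) ∈ S := h2
        simpa [mul_assoc] using h4
      have h5 : (j : G)⁻¹ * y * j ∈ X := by
        have := (inferInstance : X.Normal).conj_mem y y.2 (j : G)⁻¹
        simpa using this
      have h6 := hXS _ h5 h3
      apply hy
      apply Subtype.ext
      have h7 : (y : G) = j * ((j : G)⁻¹ * y * j) * (j : G)⁻¹ := by group
      rw [h7, h6]; simp
  have hΩ : ¬ p ∣ Nat.card Ω := by
    intro h
    apply hX
    have h1 : S.subgroupOf J ⊔ X.subgroupOf J = ⊤ := by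
      rw [← Subgroup.subgroupOf_sup hSJ hXJ, sup_comm, ← hJ]
      exact Subgroup.subgroupOf_self J
    have h2 := index_dvd_card_of_sup (X.subgroupOf J) (S.subgroupOf J) h1
    rw [Nat.card_congr (Subgroup.subgroupOfEquivOfLe hXJ).toEquiv] at h2
    exact h.trans h2
  have htr1 : LinearMap.trace ℂ (Ω → ℂ) (KK τ c * KK τ c⁻¹) =
      ((Nat.card X * (Nat.card (Subgroup.centralizer {c}) * Nat.card Ω) : ℕ) : ℂ) := by
    rw [trace_KK_mul]
    push_cast
    congr 1
    simp only [ht]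
    rw [Finset.sum_ite, Finset.sum_const_zero, add_zero, Finset.sum_const, nsmul_eq_mul]
    congr 2
    have hcc : Nat.card (Subgroup.centralizer {c}) =
      ((Subgroup.centralizer {c} : Subgroup X) : Set X).ncard := Nat.card_coe_set_eq _
    rw [hcc, ← Set.ncard_coe_finset]
    congr 1
    ext u
    simp only [Finset.coe_filter, Finset.mem_univ, true_and, Set.mem_setOf_eq, SetLike.mem_coe,
      Subgroup.mem_centralizer_iff, Set.mem_singleton_iff, forall_eq]
    rw [mul_inv_eq_one, mul_inv_eq_iff_eq_mul, eq_comm]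
  have htr2 : LinearMap.trace ℂ (Ω → ℂ) (KK τ c' * KK τ c⁻¹) = 0 := by
    rw [trace_KK_mul]
    simp only [ht]
    rw [Finset.sum_eq_zero, mul_zero]
    intro u _
    rw [if_neg]
    intro h
    rw [mul_inv_eq_one] at h
    exact hncj u h.symm
  rw [trace_KK_spec] at htr1 htr2
  -- the support as a set with `S`-action
  have hsm : ∀ (s : S) (ω : CF X), Spec τ ω ≠ ⊥ → Spec τ (s • ω : CF X) ≠ ⊥ := by
    intro s ω h h'
    apply h
    rw [← Submodule.finrank_eq_zero] at h' ⊢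
    rw [← h']
    exact (finrank_spec_smul X hXJ σ ⟨s, hSJ s.2⟩ ω).symm
  let A : SubMulAction S (CF X) :=
    { carrier := {ω | Spec τ ω ≠ ⊥}
      smul_mem' := fun s ω h => hsm s ω h }
  have hAfin : Finite A := (spec_finite τ).to_subtype
  let _ := Fintype.ofFinite A
  let f : A → ℂ := fun ω => ω.1 c * ω.1 c⁻¹ * (finrank ℂ (Spec τ ω.1) : ℂ)
    - ω.1 c' * ω.1 c⁻¹ * (finrank ℂ (Spec τ ω.1) : ℂ)
  have hval : ∀ (y : X), (∀ s ∈ S, s * (y : G) = y * s) → ∀ (s : S) (ω : CF X),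
      (s • ω : CF X) y = ω y := by
    intro y hy s ω
    show ω (MulAut.conjNormal (s : G)⁻¹ y) = ω y
    congr 1
    apply Subtype.ext
    have := hy _ (inv_mem s.2)
    rw [MulAut.conjNormal_apply, this]; simp
  have hci : ∀ s ∈ S, s * ((c⁻¹ : X) : G) = (c⁻¹ : X) * s := by
    intro s hs
    have h1 : Commute s (c : G) := hc s hs
    exact h1.inv_right
  have hfsum : ∑ ω, f ω =
      ((Nat.card X * (Nat.card (Subgroup.centralizer {c}) * Nat.card Ω) : ℕ) : ℂ) := by
    rw [← sub_zero ((_ : ℕ) : ℂ), ← htr1, ← htr2, ← Finset.sum_sub_distrib]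
    let F : (X → ℂ) → ℂ := fun ω => ω c * ω c⁻¹ * (finrank ℂ (Spec τ ω) : ℂ)
      - ω c' * ω c⁻¹ * (finrank ℂ (Spec τ ω) : ℂ)
    let e : A ≃ {ω // ω ∈ (spec_finite τ).toFinset} :=
      Equiv.subtypeEquivRight (fun ω => ((spec_finite τ).mem_toFinset).symm)
    have h1 : ∑ ω ∈ (spec_finite τ).toFinset, F ω =
      ∑ ω : {ω // ω ∈ (spec_finite τ).toFinset}, F ω.1 := (Finset.sum_coe_sort _ F).symm
    refine Eq.trans ?_ h1.symm
    exact Fintype.sum_equiv e _ _ (fun ω => rfl)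
  obtain ⟨z, hz, hz2⟩ := orbit_sum hp hS f (by
      intro s ω
      show (s • ω.1 : CF X) c * (s • ω.1 : CF X) c⁻¹ * (finrank ℂ (Spec τ (s • ω.1 : CF X)) : ℂ)
        - (s • ω.1 : CF X) c' * (s • ω.1 : CF X) c⁻¹ * (finrank ℂ (Spec τ (s • ω.1 : CF X)) : ℂ)
        = _
      have h1 : finrank ℂ (Spec τ (s • ω.1 : CF X)) = finrank ℂ (Spec τ ω.1) :=
        finrank_spec_smul X hXJ σ ⟨s, hSJ s.2⟩ ω.1
      rw [h1, hval c hc, hval c' hc', hval c⁻¹ hci])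
    (by
      intro ω
      have h1 : ∀ y, IsIntegral ℤ (ω.1 y) := fun y => spec_integral τ ω.1 ω.2 y
      exact (((h1 _).mul (h1 _)).mul (isIntegral_natCast _)).sub
        (((h1 _).mul (h1 _)).mul (isIntegral_natCast _)))
    (by
      intro ω hfix
      have h1 : ∀ y, IsIntegral ℤ (ω.1 y) := fun y => spec_integral τ ω.1 ω.2 y
      by_cases hd : p ∣ finrank ℂ (Spec τ ω.1)
      · obtain ⟨k, hk⟩ := hd
        refine ⟨ω.1 c * ω.1 c⁻¹ * (k : ℂ) - ω.1 c' * ω.1 c⁻¹ * (k : ℂ),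
          (((h1 _).mul (h1 _)).mul (isIntegral_natCast _)).sub
          (((h1 _).mul (h1 _)).mul (isIntegral_natCast _)), ?_⟩
        simp only [f]
        rw [hk]; push_cast; ring
      · refine ⟨0, isIntegral_zero, ?_⟩
        have h2 := hcon ω.1 hd (fun s hs => congrArg Subtype.val (hfix ⟨s, hs⟩))
        simp only [f]
        rw [h2]; ring)
  rw [hfsum] at hz2
  have hdiv := not_dvd_of_integral hp z hz hz2
  rcases hp.dvd_mul.1 hdiv with h | h
  · exact hX h
  rcases hp.dvd_mul.1 h with h | h
  · exact hX (h.trans (Subgroup.card_subgroup_dvd_card _))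
  · exact hΩ h

end lemma_z

section series

/-- series of normal subgroups with `p`- or prime-to-p factors -/
def NSeries (p : ℕ) (G : Type) [Group G] : Prop :=
  ∃ (n : ℕ) (M : ℕ → Subgroup G), M 0 = ⊥ ∧ M n = ⊤ ∧ (∀ i, (M i).Normal) ∧
    ∀ i, M i ≤ M (i + 1) ∧ ((∀ x ∈ M (i + 1), ∃ k : ℕ, x ^ p ^ k ∈ M i) ∨
      (∀ x ∈ M (i + 1), ∃ m : ℕ, Nat.Coprime m p ∧ x ^ m ∈ M i))

lemma mem_of_pow_coprime {G : Type} [Group G] (H : Subgroup G) (y : G) (n : ℕ) (h : y ^ n ∈ H)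
    (hc : n.Coprime (orderOf y)) : y ∈ H := by
  obtain ⟨m, hm⟩ := exists_pow_eq_self_of_coprime hc
  rw [← hm]; exact pow_mem h m

lemma nseries_quot {p : ℕ} {G H : Type} [Group G] [Group H] (f : G →* H)
    (hf : Function.Surjective f) (h : NSeries p G) : NSeries p H := by
  obtain ⟨n, M, h0, hn, hN, hM⟩ := h
  refine ⟨n, fun i => (M i).map f, by simp [h0], ?_, fun i => (hN i).map f hf, fun i => ⟨?_, ?_⟩⟩
  · show (M n).map f = ⊤
    rw [hn, Subgroup.map_top_of_surjective f hf]
  · exact Subgroup.map_mono (hM i).1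
  · rcases (hM i).2 with h | h
    · left
      rintro _ ⟨x, hx, rfl⟩
      obtain ⟨k, hk⟩ := h x hx
      exact ⟨k, x ^ p ^ k, hk, map_pow _ _ _⟩
    · right
      rintro _ ⟨x, hx, rfl⟩
      obtain ⟨m, hm, hk⟩ := h x hx
      exact ⟨m, hm, x ^ m, hk, map_pow _ _ _⟩

/-- the (normal) subgroup generated by the elements of `R` with order satisfying `c` -/
def genBy {G : Type} [Group G] (R : Subgroup G) (c : ℕ → Prop) : Subgroup G :=
  Subgroup.closure {y | y ∈ R ∧ c (orderOf y)}

lemma genBy_normal {G : Type} [Group G] (R : Subgroup G) (hR : R.Normal) (c : ℕ → Prop) :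
    (genBy R c).Normal := by
  constructor
  intro x hx g
  induction hx using Subgroup.closure_induction with
  | mem y hy =>
    apply Subgroup.subset_closure
    refine ⟨hR.conj_mem y hy.1 g, ?_⟩
    have : orderOf (g * y * g⁻¹) = orderOf y := by
      have := orderOf_injective (MulAut.conj g).toMonoidHom (MulAut.conj g).injective y
      simpa using this
    rw [this]; exact hy.2
  | one => simp
  | mul a b _ _ ha hb =>
    have : g * (a * b) * g⁻¹ = (g * a * g⁻¹) * (g * b * g⁻¹) := by group
    rw [this]; exact mul_mem ha hb
  | inv a _ ha =>
    have : g * a⁻¹ * g⁻¹ = (g * a * g⁻¹)⁻¹ := by group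
    rw [this]; exact inv_mem ha

lemma genBy_le {G : Type} [Group G] (R : Subgroup G) (c : ℕ → Prop) : genBy R c ≤ R :=
  (Subgroup.closure_le _).2 (fun y hy => hy.1)

lemma nseries_of_psolvable {p : ℕ} (hp : p.Prime) {G : Type} [Group G] [Finite G]
    (h : IsPSolvable p G) : NSeries p G := by
  obtain ⟨n, s, h0, hn, hs⟩ := h
  -- reverse recursion
  let pf : ℕ → Prop := fun i => ∃ hi : i < n,
    ∀ x ∈ s (⟨i, hi⟩ : Fin n).succ, ∃ k : ℕ, x ^ p ^ k ∈ s (⟨i, hi⟩ : Fin n).castSucc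
  let step : ℕ → Subgroup G → Subgroup G := fun j R =>
    if pf (n - (j + 1)) then genBy R (fun m => Nat.Coprime m p)
      else genBy R (fun m => ∃ k, m = p ^ k)
  let Rd : ℕ → Subgroup G := fun j => Nat.rec ⊤ step j
  have Rd0 : Rd 0 = ⊤ := rfl
  have RdS : ∀ j, Rd (j + 1) = step j (Rd j) := fun j => rfl
  have hnorm : ∀ j, (Rd j).Normal := by
    intro j
    induction j with
    | zero => rw [Rd0]; infer_instance
    | succ j ih =>
      rw [RdS]
      simp only [step]
      split_ifs <;> exact genBy_normal _ ih _
  have hle : ∀ j (hj : j ≤ n), Rd j ≤ s ⟨n - j, by omega⟩ := by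
    intro j
    induction j with
    | zero =>
      intro _
      have : (⟨n - 0, by omega⟩ : Fin (n + 1)) = Fin.last n := by ext; simp
      rw [this, hn]; exact le_top
    | succ j ih =>
      intro hj
      have hi : n - (j + 1) < n := by omega
      have e1 : (⟨n - (j + 1), by omega⟩ : Fin (n + 1)) = (⟨n - (j + 1), hi⟩ : Fin n).castSucc := rfl
      have e2 : (⟨n - j, by omega⟩ : Fin (n + 1)) = (⟨n - (j + 1), hi⟩ : Fin n).succ := by
        ext; simp; omega
      have ih' := ih (by omega)
      rw [e2] at ih'
      rw [e1, RdS]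
      simp only [step]
      split_ifs with hpf
      · obtain ⟨_, hpf⟩ := hpf
        refine (Subgroup.closure_le _).2 ?_
        rintro y ⟨hy, hy2⟩
        obtain ⟨k, hk⟩ := hpf y (ih' hy)
        exact mem_of_pow_coprime _ _ _ hk (Nat.Coprime.pow_left k hy2.symm)
      · have := (hs ⟨n - (j + 1), hi⟩).2.2
        have h2 := this.resolve_left (fun h => hpf ⟨hi, h⟩)
        refine (Subgroup.closure_le _).2 ?_
        rintro y ⟨hy, k, hk⟩
        obtain ⟨m, hm, hm2⟩ := h2 y (ih' hy)
        exact mem_of_pow_coprime _ _ _ hm2 (by rw [hk]; exact Nat.Coprime.pow_right k hm)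
  have hstep : ∀ j, Rd (j + 1) ≤ Rd j ∧ ((∀ x ∈ Rd j, ∃ k : ℕ, x ^ p ^ k ∈ Rd (j + 1)) ∨
      (∀ x ∈ Rd j, ∃ m : ℕ, Nat.Coprime m p ∧ x ^ m ∈ Rd (j + 1))) := by
    intro j
    rw [RdS]
    simp only [step]
    have hfac : ∀ x : G, ∃ k m, Nat.Coprime m p ∧ orderOf x = p ^ k * m := by
      intro x
      obtain ⟨k, m, h1, h2⟩ := Nat.exists_eq_pow_mul_and_not_dvd (orderOf_pos x).ne' p hp.ne_one
      exact ⟨k, m, ((hp.coprime_iff_not_dvd).2 h1).symm, h2⟩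
    split_ifs with hpf
    · refine ⟨genBy_le _ _, Or.inl ?_⟩
      intro x hx
      obtain ⟨k, m, hm, hx2⟩ := hfac x
      refine ⟨k, Subgroup.subset_closure ⟨pow_mem hx _, ?_⟩⟩
      show Nat.Coprime (orderOf (x ^ p ^ k)) p
      rw [orderOf_pow_of_dvd (pow_ne_zero _ hp.ne_zero) (hx2 ▸ dvd_mul_right _ _), hx2,
        Nat.mul_div_cancel_left _ (pow_pos hp.pos _)]
      exact hm
    · refine ⟨genBy_le _ _, Or.inr ?_⟩
      intro x hx
      obtain ⟨k, m, hm, hx2⟩ := hfac x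
      have hm0 : m ≠ 0 := by
        rintro rfl
        rw [mul_zero] at hx2
        exact (orderOf_pos x).ne' hx2
      refine ⟨m, hm, Subgroup.subset_closure ⟨pow_mem hx _, k, ?_⟩⟩
      rw [orderOf_pow_of_dvd hm0 (hx2 ▸ dvd_mul_left _ _), hx2,
        Nat.mul_div_cancel _ (Nat.pos_of_ne_zero hm0)]
  refine ⟨n, fun i => Rd (n - i), ?_, ?_, fun i => hnorm _, ?_⟩
  · show Rd (n - 0) = ⊥
    have := hle n le_rfl
    rw [eq_bot_iff, ← h0]
    simpa using this
  · show Rd (n - n) = ⊤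
    rw [Nat.sub_self]
    exact Rd0
  · intro i
    show Rd (n - i) ≤ Rd (n - (i + 1)) ∧ _
    by_cases hi : i < n
    · have h1 : n - i = (n - (i + 1)) + 1 := by omega
      show _ ∧ ((∀ x ∈ Rd (n - (i + 1)), ∃ k : ℕ, x ^ p ^ k ∈ Rd (n - i)) ∨
        (∀ x ∈ Rd (n - (i + 1)), ∃ m : ℕ, Nat.Coprime m p ∧ x ^ m ∈ Rd (n - i)))
      rw [h1]
      exact hstep _
    · have h1 : n - i = 0 := by omega
      have h2 : n - (i + 1) = 0 := by omega
      refine ⟨by rw [h1, h2], Or.inl (fun x hx => ⟨0, ?_⟩)⟩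
      show x ^ p ^ 0 ∈ Rd (n - i)
      rw [h1, Rd0]; trivial

end series

section quot

lemma rirr_comp {G H V : Type} [Group G] [Group H] [AddCommGroup V] [Module ℂ V] (f : G →* H)
    (hf : Function.Surjective f) (ρ : Representation ℂ H V) (h : RIrr ρ) :
    RIrr (ρ.comp f : Representation ℂ G V) := by
  refine ⟨h.1, fun U hU => h.2 U (fun g v hv => ?_)⟩
  obtain ⟨x, rfl⟩ := hf g
  exact hU x v hv

lemma star_quot {p a : ℕ} {G H : Type} [Group G] [Group H] (f : G →* H)
    (hf : Function.Surjective f) (h : StarP p a G) : StarP p a H :=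
  fun V _ _ _ ρ hρ hd => h V (ρ.comp f) (rirr_comp f hf ρ hρ) hd

lemma mindeg_quot {N : ℕ} {G H : Type} [Group G] [Group H] (f : G →* H)
    (hf : Function.Surjective f) (h : MinDeg N G) : MinDeg N H :=
  fun V _ _ _ ρ hρ => h V (ρ.comp f) (rirr_comp f hf ρ hρ)

lemma exists_spec_ne {X V W : Type} [Group X] [Finite X] [AddCommGroup V] [Module ℂ V]
    [FiniteDimensional ℂ V] [AddCommGroup W] [Module ℂ W] (τ : Representation ℂ X V)
    (T : V →ₗ[ℂ] W) (hT : T ≠ 0) : ∃ ω, ∃ v ∈ Spec τ ω, T v ≠ 0 := by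
  by_contra hcon
  push Not at hcon
  apply hT
  have : (⊤ : Submodule ℂ V) ≤ LinearMap.ker T := by
    rw [← spec_top τ]
    exact iSup_le (fun ω v hv => hcon ω v hv)
  ext v
  exact this (Submodule.mem_top (x := v))

lemma sylow_conj_in {G : Type} [Group G] [Finite G] {p : ℕ} [Fact p.Prime] (P R : Sylow p G)
    (K : Subgroup G) (hP : P.1 ≤ K) (hR : R.1 ≤ K) :
    ∃ g ∈ K, ∀ z, z ∈ R.1 ↔ g⁻¹ * z * g ∈ P.1 := by
  obtain ⟨g, hg⟩ := sylow_conj (P.subtype hP) (R.subtype hR)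
  refine ⟨g, g.2, fun z => ?_⟩
  constructor
  · intro hz
    exact (hg ⟨z, hR hz⟩).1 hz
  · intro hz
    have hzK : z ∈ K := by
      have h1 := mul_mem (mul_mem g.2 (hP hz)) (inv_mem g.2)
      simpa [mul_assoc] using h1
    exact (hg ⟨z, hzK⟩).2 hz

end quot

section casetwo

lemma cf_fix_of_class {G : Type} [Group G] (X : Subgroup G) [X.Normal] (ω : CF X)
    (h : ∀ y u : X, ω (u * y * u⁻¹) = ω y) (x : G) (hx : x ∈ X) : x • ω = ω := by
  funext y
  rw [cf_smul]
  have : MulAut.conjNormal x⁻¹ y = (⟨x⁻¹, inv_mem hx⟩ : X) * y * (⟨x⁻¹, inv_mem hx⟩ : X)⁻¹ := by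
    ext; simp
  rw [this, h]

lemma case_core {H : Type} [Group H] [Finite H] {p a : ℕ} (hp : p.Prime) (X S B : Subgroup H)
    [X.Normal] (hX : ¬ p ∣ Nat.card X) (hSB : S ≤ B) (hB : IsPGroup p B)
    (hBS : B ≤ Subgroup.normalizer (S : Set H)) (l : H) (hl : l ∈ X)
    (hlS : ∀ s ∈ S, l * s = s * l) (b₀ : H) (hb₀ : b₀ ∈ B) (hne : b₀ * l ≠ l * b₀)
    (hstar : StarP p a H) (hidx : ¬ p ^ (a + 1) ∣ S.index) :
    ∃ ω : CF X, (∃ b ∈ B, b • ω ≠ ω) ∧ (∀ x ∈ X, x • ω = ω) ∧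
      ∃ R : Sylow p H, S ≤ R.1 ∧ ∀ r ∈ R.1, r • ω = ω := by
  have hSp : IsPGroup p S := hB.to_le hSB
  obtain ⟨c, hcX, hcS, b, hbB, hcb⟩ := class_two hp X S B hX (by rwa [sup_eq_right.2 hSB]) l hl hlS
    b₀ hb₀ hne
  have hc' : ∀ s ∈ S, s * (b * c * b⁻¹) = (b * c * b⁻¹) * s := by
    intro s hs
    have h1 : b⁻¹ * s * b ∈ S := by
      have := (Subgroup.mem_normalizer_iff.1 (inv_mem (hBS hbB)) s).1 hs
      simpa using this
    have h2 := hcS _ h1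
    calc s * (b * c * b⁻¹) = b * ((b⁻¹ * s * b) * c) * b⁻¹ := by group
      _ = b * (c * (b⁻¹ * s * b)) * b⁻¹ := by rw [h2]
      _ = _ := by group
  have hbcX : b * c * b⁻¹ ∈ X := ‹X.Normal›.conj_mem c hcX b
  obtain ⟨E, _, _, _, σ, ω, hω1, hω2, hω3⟩ := lemma_z hp X S hX hSp ⟨b * c * b⁻¹, hbcX⟩ ⟨c, hcX⟩
    hc' hcS (fun u hu => hcb u u.2 (congrArg Subtype.val hu)) (X ⊔ S) le_sup_left le_sup_right rfl
  have hbot : Spec (resXJ X (le_sup_left : X ≤ X ⊔ S) σ) ω ≠ ⊥ := by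
    intro h
    rw [h] at hω1
    simp at hω1
  have hXω : ∀ x ∈ X, x • ω = ω := cf_fix_of_class X ω (fun y u => spec_class _ ω hbot y u)
  have hJω : ∀ j : (X ⊔ S : Subgroup H), (j : H) • ω = ω := by
    have : X ⊔ S ≤ MulAction.stabilizer H ω := sup_le (fun x hx => hXω x hx) (fun s hs => hω2 s hs)
    exact fun j => this j.2
  have hinv := spec_fix_inv X (le_sup_left : X ≤ X ⊔ S) σ ω hJω
  have hd : ¬ p ^ (a + 1) ∣ (X ⊔ S).index *
      finrank ℂ (Spec (resXJ X (le_sup_left : X ≤ X ⊔ S) σ) ω) := by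
    intro h
    have h1 : p ^ (a + 1) ∣ (X ⊔ S).index :=
      (Nat.Coprime.pow_left _ ((Nat.Prime.coprime_iff_not_dvd hp).2 hω1)).dvd_of_dvd_mul_right h
    exact hidx (h1.trans (Subgroup.index_dvd_of_le le_sup_right))
  obtain ⟨V, _, _, _, ρ, hirr, hdim, T, hT0, hT⟩ := exists_over (X ⊔ S) (subrep σ _ hinv) hstar hd
  have hne0 : Spec (resX X ρ) ω ≠ ⊥ := by
    obtain ⟨ω', v, hv, hTv⟩ := exists_spec_ne (resX X ρ) T hT0
    have h1 : ((Submodule.subtype _).comp T) v ∈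
        Spec (resXJ X (le_sup_left : X ≤ X ⊔ S) σ) ω' := by
      apply spec_map_one (τ := resX X ρ) ((Submodule.subtype _).comp T) _ ω' v hv
      intro x w
      have := hT ⟨x, (le_sup_left : X ≤ X ⊔ S) x.2⟩ w
      exact congrArg Subtype.val this
    have h2 : ω' = ω := by
      by_contra hne'
      have hdis := (spec_indep (resXJ X (le_sup_left : X ≤ X ⊔ S) σ)).pairwiseDisjoint hne'
      have := (Submodule.disjoint_def.1 hdis) _ h1 (T v).2
      exact hTv (Subtype.ext this)
    intro h
    rw [h2, h, Submodule.mem_bot] at hv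
    exact hTv (by rw [hv, map_zero])
  obtain ⟨-, R, hSR, hR⟩ := b_two X hp ρ hirr hdim ω hne0 S hSp hω2
  refine ⟨ω, ⟨b, hbB, fun h => hω3 ?_⟩, hXω, R, hSR, hR⟩
  have := cf_fix X h ⟨c, hcX⟩
  rw [← this]
  congr 1

lemma case_two {G : Type} [Group G] [Finite G] {p a : ℕ} (hp : p.Prime) (P Q : Sylow p G)
    (hPQ : Q ≠ P) (hmin : MinDeg (p ^ a) P.1) (hidx : (P.1 ⊓ Q.1).relIndex P.1 ≤ p ^ a)
    (hns : NSeries p G) (hstar : StarP p a G) : False := by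
  haveI : Fact p.Prime := ⟨hp⟩
  obtain ⟨n, M, hM0, hMn, hMN, hM⟩ := hns
  set S : Subgroup G := P.1 ⊓ Q.1 with hSdef
  set L : Subgroup G := Subgroup.normalizer (S : Set G) with hLdef
  have hSP : S ≤ P.1 := inf_le_left
  have hSQ : S ≤ Q.1 := inf_le_right
  have hRL : ∀ R : Sylow p G, S ≤ R.1 → R.1 ≤ L := by
    intro R hR
    apply step_zero_norm R.1 S (mindeg_sylow P R hmin) hR
    have h1 := Subgroup.relIndex_mul_relIndex ⊥ S P.1 bot_le hSP
    have h2 := Subgroup.relIndex_mul_relIndex ⊥ S R.1 bot_le hR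
    rw [Subgroup.relIndex_bot_left, Subgroup.relIndex_bot_left] at h1 h2
    have h3 : Nat.card R.1 = Nat.card P.1 := Nat.card_congr (R.equiv P).toEquiv
    have h4 : S.relIndex R.1 = S.relIndex P.1 :=
      Nat.eq_of_mul_eq_mul_left (Nat.card_pos (α := S)) (by rw [h1, h2, h3])
    rw [h4]; exact hidx
  have hPL := hRL P hSP
  let Φ : ℕ → Prop := fun t => ∀ R : Sylow p G, S ≤ R.1 →
    ∃ l ∈ M t, l ∈ L ∧ ∀ z, z ∈ R.1 ↔ l⁻¹ * z * l ∈ P.1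
  have hΦn : ∃ t, Φ t := by
    refine ⟨n, fun R hR => ?_⟩
    obtain ⟨g, hg, h⟩ := sylow_conj_in P R L hPL (hRL R hR)
    exact ⟨g, by rw [hMn]; trivial, hg, h⟩
  have hΦ0 : ¬ Φ 0 := by
    intro h
    obtain ⟨l, hl, -, hz⟩ := h Q hSQ
    rw [hM0, Subgroup.mem_bot] at hl
    subst hl
    apply hPQ
    apply Sylow.ext
    ext z
    simpa using hz z
  obtain ⟨t, ht1, ht2⟩ : ∃ t, Φ (t + 1) ∧ ¬ Φ t := by
    by_contra hcon
    push Not at hcon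
    obtain ⟨t, ht⟩ := hΦn
    induction t with
    | zero => exact hΦ0 ht
    | succ k ih => exact ih (hcon k ht)
  have hMtN := hMN t
  have hMtN1 := hMN (t + 1)
  -- if `g = m q` conjugates `P` to `R`, with `m` in `M t` and `q` in `P`, then so does `m`
  have hdec : ∀ R : Sylow p G, ∀ g : G, g ∈ L → g ∈ M t ⊔ P.1 → 
      (∀ z, z ∈ R.1 ↔ g⁻¹ * z * g ∈ P.1) → 
      ∃ l ∈ M t, l ∈ L ∧ ∀ z, z ∈ R.1 ↔ l⁻¹ * z * l ∈ P.1 := by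
    intro R g hgL hg hz
    obtain ⟨m, hm, q, hq, rfl⟩ := Subgroup.mem_sup_of_normal_left.1 hg
    have hmL : m ∈ L := by
      have := mul_mem hgL (inv_mem (hPL hq))
      simpa using this
    refine ⟨m, hm, hmL, fun z => (hz z).trans ?_⟩
    have : (m * q)⁻¹ * z * (m * q) = q⁻¹ * (m⁻¹ * z * m) * q := by group
    rw [this]
    constructor
    · intro h
      have h2 := mul_mem (mul_mem hq h) (inv_mem hq)
      have h3 : q * (q⁻¹ * (m⁻¹ * z * m) * q) * q⁻¹ = m⁻¹ * z * m := by group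
      rwa [h3] at h2
    · intro h
      exact mul_mem (mul_mem (inv_mem hq) h) hq
  let π : G →* G ⧸ M t := QuotientGroup.mk' (M t)
  have hπs : Function.Surjective π := QuotientGroup.mk'_surjective _
  have hπk : ∀ x, π x = 1 ↔ x ∈ M t := fun x => QuotientGroup.eq_one_iff x
  have hXN : ((M (t + 1)).map π).Normal := hMtN1.map π hπs
  rcases (hM t).2 with hpf | hpf
  · -- p-factor
    apply ht2
    intro R hSR
    obtain ⟨l, hl, hlL, hz⟩ := ht1 R hSR
    refine hdec R l hlL ?_ hz
    have hXp : IsPGroup p ((M (t + 1)).map π) := by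
      rintro ⟨_, x, hx, rfl⟩
      obtain ⟨k, hk⟩ := hpf x hx
      refine ⟨k, Subtype.ext ?_⟩
      show (π x) ^ p ^ k = 1
      rw [← map_pow]
      exact (hπk _).2 hk
    have hle : (M (t + 1)).map π ≤ (P.mapSurjective hπs).1 :=
      IsPGroup.le_sylow_of_normal hXp _
    obtain ⟨q, hq, hql⟩ : π l ∈ P.1.map π := hle ⟨l, hl, rfl⟩
    have : l = (l * q⁻¹) * q := by group
    rw [this]
    refine mul_mem (Subgroup.mem_sup_left ((hπk _).1 ?_)) (Subgroup.mem_sup_right hq)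
    rw [map_mul, map_inv, hql, mul_inv_cancel]
  · -- prime-to-p factor
    obtain ⟨R, hSR, hR⟩ : ∃ R : Sylow p G, S ≤ R.1 ∧
        ¬ ∃ l ∈ M t, l ∈ L ∧ ∀ z, z ∈ R.1 ↔ l⁻¹ * z * l ∈ P.1 := by
      by_contra hcon
      push Not at hcon
      apply ht2
      intro R hR
      obtain ⟨l, h1, h2, h3⟩ := hcon R hR
      exact ⟨l, h1, h2, h3⟩
    obtain ⟨l, hl, hlL, hz⟩ := ht1 R hSR
    obtain ⟨x, hxP, hx⟩ : ∃ x ∈ P.1, π x * π l ≠ π l * π x := by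
      by_contra hcon
      push Not at hcon
      have hRK : R.1 ≤ L ⊓ (M t ⊔ P.1) := by
        intro r hr
        refine ⟨hRL R hSR hr, ?_⟩
        have hx := (hz r).1 hr
        have h1 := hcon _ hx
        have : r = (r * (l⁻¹ * r * l)⁻¹) * (l⁻¹ * r * l) := by group
        rw [this]
        refine mul_mem (Subgroup.mem_sup_left ((hπk _).1 ?_)) (Subgroup.mem_sup_right hx)
        have h2 : π (l⁻¹ * r * l) = π r := by
          have h3 : π l * π (l⁻¹ * r * l) = π r * π l := by simp only [map_mul, map_inv]; group
          rw [← h1] at h3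
          exact mul_right_cancel h3
        rw [map_mul, map_inv, h2, mul_inv_cancel]
      obtain ⟨g, hg, hgz⟩ := sylow_conj_in P R _ (le_inf hPL le_sup_right) hRK
      exact hR (hdec R g hg.1 hg.2 hgz)
    have hXp : ¬ p ∣ Nat.card ((M (t + 1)).map π) := by
      intro hdvd
      obtain ⟨⟨_, y, hy, rfl⟩, hyo⟩ := exists_prime_orderOf_dvd_card' p hdvd
      obtain ⟨m, hmc, hm⟩ := hpf y hy
      rw [← Subgroup.orderOf_coe] at hyo
      change orderOf (π y) = p at hyo
      have h1 : (π y) ^ m = 1 := by rw [← map_pow]; exact (hπk _).2 hm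
      have h2 := orderOf_dvd_of_pow_eq_one h1
      rw [hyo] at h2
      have := Nat.Coprime.eq_one_of_dvd hmc.symm h2
      exact hp.one_lt.ne' this
    have hlS : ∀ s ∈ S.map π, π l * s = s * π l := by
      rintro _ ⟨s, hs, rfl⟩
      have h1 : l * s * l⁻¹ ∈ S := (Subgroup.mem_normalizer_iff.1 hlL s).1 hs
      have h2 : l * s * l⁻¹ * s⁻¹ ∈ S := mul_mem h1 (inv_mem hs)
      have h3 : l * s * l⁻¹ * s⁻¹ ∈ M (t + 1) := by
        have : l * s * l⁻¹ * s⁻¹ = l * (s * l⁻¹ * s⁻¹) := by group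
        rw [this]
        exact mul_mem hl (hMtN1.conj_mem _ (inv_mem hl) s)
      obtain ⟨m, hmc, hm⟩ := hpf _ h3
      have h4 : l * s * l⁻¹ * s⁻¹ ∈ M t := by
        apply mem_of_pow_coprime _ _ m hm
        obtain ⟨k, hk⟩ := (IsPGroup.iff_orderOf.1 (P.2.to_le hSP)) ⟨_, h2⟩
        rw [← Subgroup.orderOf_coe] at hk
        change orderOf (l * s * l⁻¹ * s⁻¹) = p ^ k at hk
        rw [hk]
        exact hmc.pow_right k
      have h5 := (hπk _).2 h4
      have h6 : π l * π s * (π l)⁻¹ * (π s)⁻¹ = 1 := by simpa using h5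
      rw [mul_inv_eq_one, mul_inv_eq_iff_eq_mul] at h6
      exact h6
    have hidx2 : ¬ p ^ (a + 1) ∣ (S.map π).index := by
      intro h
      have h1 : p ^ (a + 1) ∣ S.index := h.trans (Subgroup.index_map_dvd S hπs)
      have h2 := Subgroup.relIndex_mul_index hSP
      rw [← h2] at h1
      have hPi : ¬ p ∣ P.1.index := P.not_dvd_index
      have h3 : p ^ (a + 1) ∣ S.relIndex P.1 :=
        (Nat.Coprime.pow_left _ ((Nat.Prime.coprime_iff_not_dvd hp).2 hPi)).dvd_of_dvd_mul_right h1
      have h4 := Nat.le_of_dvd (Nat.pos_of_ne_zero Subgroup.index_ne_zero_of_finite) h3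
      have h5 : p ^ a < p ^ (a + 1) := Nat.pow_lt_pow_right hp.one_lt (Nat.lt_succ_self a)
      exact absurd (h5.trans_le (h4.trans hidx)) (lt_irrefl _)
    have hBS : P.1.map π ≤ Subgroup.normalizer ((S.map π : Subgroup _) : Set (G ⧸ M t)) := by
      refine (Subgroup.map_mono hPL).trans ?_
      exact Subgroup.le_normalizer_map π
    obtain ⟨ω, ⟨b, ⟨q, hq, rfl⟩, hb⟩, hXω, Rb, hSRb, hRb⟩ := case_core hp ((M (t + 1)).map π)
      (S.map π) (P.1.map π) hXp (Subgroup.map_mono hSP) (P.2.map π) hBS (π l) ⟨l, hl, rfl⟩ hlS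
      (π x) ⟨x, hxP, rfl⟩ hx (star_quot π hπs hstar) hidx2
    have hci : ¬ p ∣ (Rb.1.comap π).index := by
      rw [Subgroup.index_comap_of_surjective _ hπs]
      exact Rb.not_dvd_index
    obtain ⟨R', hSR', hR'⟩ := exists_sylow_between hp (Rb.1.comap π) S (P.2.to_le hSP)
      (Subgroup.map_le_iff_le_comap.1 hSRb) hci
    obtain ⟨l', hl', -, hz'⟩ := ht1 R' hSR'
    apply hb
    have h1 : l' * q * l'⁻¹ ∈ R'.1 := (hz' _).2 (by
      have : l'⁻¹ * (l' * q * l'⁻¹) * l' = q := by group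
      rw [this]; exact hq)
    have h2 := hRb _ (hR' h1)
    have h3 := hXω (π l') ⟨l', hl', rfl⟩
    have h4 : π q = (π l')⁻¹ * π (l' * q * l'⁻¹) * π l' := by simp only [map_mul, map_inv]; group
    rw [h4, mul_smul, mul_smul, h3, h2, inv_smul_eq_iff, h3]

end casetwo

section caseone

lemma spec_scalar {X V : Type} [Group X] [Finite X] [AddCommGroup V] [Module ℂ V]
    [FiniteDimensional ℂ V] (τ : Representation ℂ X V) (hab : ∀ x y : X, x * y = y * x)
    (ω : X → ℂ) (v : V) (hv : v ∈ Spec τ ω) (y : X) : τ y v = (ω y / Nat.card X) • v := by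
  have hn : (Nat.card X : ℂ) ≠ 0 := by exact_mod_cast (Nat.card_pos (α := X)).ne'
  have hK : KK τ y = (Nat.card X : ℂ) • τ y := by
    letI := Fintype.ofFinite X
    have : ∀ u : X, u * y * u⁻¹ = y := fun u => by rw [hab u y]; group
    simp only [KK, this, Finset.sum_const, Finset.card_univ, ← Nat.card_eq_fintype_card]
    rw [Nat.cast_smul_eq_nsmul]
  have hss : (KK τ y).IsSemisimple := by
    refine Module.End.isSemisimple_of_squarefree_aeval_eq_zero
      (p := Polynomial.X ^ (Nat.card X) - Polynomial.C ((Nat.card X : ℂ) ^ Nat.card X)) ?_ ?_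
    · exact (Polynomial.separable_X_pow_sub_C _ hn (pow_ne_zero _ hn)).squarefree
    · rw [map_sub, map_pow, Polynomial.aeval_X, Polynomial.aeval_C, hK, smul_pow, ← map_pow,
        pow_card_eq_one', map_one, Algebra.algebraMap_eq_smul_one, sub_self]
  have h1 : v ∈ (KK τ y).maxGenEigenspace (ω y) := (Submodule.mem_iInf _).1 hv y
  rw [hss.isFinitelySemisimple.maxGenEigenspace_eq_eigenspace, Module.End.mem_eigenspace_iff,
    hK] at h1
  rw [div_eq_inv_mul, mul_smul, ← h1, LinearMap.smul_apply, inv_smul_smul₀ hn]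

lemma case_one {G : Type} [Group G] [Finite G] {p a : ℕ} (hp : p.Prime) (P : Sylow p G)
    (hQ : ∀ Q : Sylow p G, (P.1 ⊓ Q.1).relIndex P.1 ≤ p ^ a → Q = P)
    (hstar : StarP p a G) (M : Subgroup G) [M.Normal] (hMP : M ≤ P.1)
    (hab : ∀ x y : M, x * y = y * x)
    {E : Type} [AddCommGroup E] [Module ℂ E] [FiniteDimensional ℂ E]
    (ψ : Representation ℂ P.1 E) (hψ : RIrr ψ) (hdim : finrank ℂ E = p ^ a) :
    ∃ ψ' : Representation ℂ P.1 E, RIrr ψ' ∧ ∀ y : P.1, (y : G) ∈ M → ψ' y = 1 := by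
  haveI : Fact p.Prime := ⟨hp⟩
  have hd : ¬ p ^ (a + 1) ∣ P.1.index * finrank ℂ E := by
    rw [hdim]
    intro h
    have hPi : ¬ p ∣ P.1.index := P.not_dvd_index
    have h3 : p ^ (a + 1) ∣ p ^ a :=
      (Nat.Coprime.pow_left _ ((Nat.Prime.coprime_iff_not_dvd hp).2 hPi)).dvd_of_dvd_mul_left h
    have h4 := Nat.le_of_dvd (pow_pos hp.pos _) h3
    have h5 : p ^ a < p ^ (a + 1) := Nat.pow_lt_pow_right hp.one_lt (Nat.lt_succ_self a)
    exact absurd (h5.trans_le h4) (lt_irrefl _)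
  obtain ⟨V, _, _, _, ρ, hirr, hdimV, T, hT0, hT⟩ := exists_over P.1 ψ hstar hd
  obtain ⟨w, v, hv, hTv⟩ := exists_spec_ne (resX M ρ) T hT0
  let lam : CF M := w
  have hv' : T v ∈ Spec (resXJ M hMP ψ) lam := by
    apply spec_map_one (τ := resX M ρ) T _ w v hv
    intro x u
    exact hT ⟨x, hMP x.2⟩ u
  have hne1 : Spec (resX M ρ) lam ≠ ⊥ := by
    intro h
    change v ∈ Spec (resX M ρ) lam at hv
    rw [h, Submodule.mem_bot] at hv
    exact hTv (by rw [hv, map_zero])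
  have hne2 : Spec (resXJ M hMP ψ) lam ≠ ⊥ := by
    intro h
    rw [h, Submodule.mem_bot] at hv'
    exact hTv hv'
  have hdim2 := irr_dim ψ hψ (fun ω : CF M => Spec (resXJ M hMP ψ) ω) (spec_indep _)
    (fun g ω u hu => spec_smul_sub M hMP ψ g ω u hu) lam hne2
  let S : Subgroup G := P.1 ⊓ MulAction.stabilizer G lam
  have hSP : S ≤ P.1 := inf_le_left
  have hSrel : S.relIndex P.1 ≤ p ^ a := by
    have h1 : S.subgroupOf P.1 = MulAction.stabilizer P.1 lam := by
      ext x
      simp only [S, Subgroup.mem_subgroupOf, Subgroup.mem_inf, MulAction.mem_stabilizer_iff]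
      exact ⟨fun h => h.2, fun h => ⟨x.2, h⟩⟩
    rw [Subgroup.relIndex, h1, ← hdim, hdim2]
    apply Nat.le_mul_of_pos_right
    rw [Module.finrank_pos_iff]
    exact Submodule.nontrivial_iff_ne_bot.2 hne2
  obtain ⟨hdl, R, hSR, hR⟩ := b_two M hp ρ hirr hdimV lam hne1 S (P.2.to_le hSP)
    (fun s hs => hs.2)
  have hRP : R = P := by
    apply hQ
    refine le_trans ?_ hSrel
    have h1 := Subgroup.relIndex_mul_relIndex S (P.1 ⊓ R.1) P.1 (le_inf hSP hSR) inf_le_left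
    rw [← h1]
    exact Nat.le_mul_of_pos_left _ (Nat.pos_of_ne_zero Subgroup.index_ne_zero_of_finite)
  subst hRP
  have hPl : ∀ g ∈ R.1, g • lam = lam := hR
  have hψtop : Spec (resXJ M hMP ψ) lam = ⊤ :=
    (hψ.2 _ (spec_fix_inv M hMP ψ lam (fun j => hPl j j.2))).resolve_left hne2
  let ell : M → ℂ := fun y => lam y / Nat.card M
  have hsc1 : ∀ y u, u ∈ Spec (resX M ρ) lam → ρ (y : M) u = ell y • u :=
    fun y u hu => spec_scalar (resX M ρ) hab lam u hu y
  have hsc2 : ∀ (y : M) u, ψ ⟨y, hMP y.2⟩ u = ell y • u :=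
    fun y u => spec_scalar (resXJ M hMP ψ) hab lam u (hψtop ▸ Submodule.mem_top) y
  set W := Spec (resX M ρ) lam with hW
  set d := finrank ℂ W with hd'
  have hWinv : RInv (ρ.comp R.1.subtype : Representation ℂ R.1 V) W := by
    intro g u hu
    have := spec_smul M ρ g lam u hu
    rwa [hPl g g.2] at this
  let δ : R.1 →* ℂ := LinearMap.det.comp (subrep _ W hWinv)
  have hδ : ∀ y : M, δ ⟨y, hMP y.2⟩ = ell y ^ d := by
    intro y
    have : (subrep _ W hWinv) ⟨y, hMP y.2⟩ = ell y • (LinearMap.id : W →ₗ[ℂ] W) := by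
      ext u
      exact hsc1 y u u.2
    show LinearMap.det ((subrep _ W hWinv) ⟨y, hMP y.2⟩) = _
    rw [this, LinearMap.det_smul, LinearMap.det_id, mul_one]
  have hell : ∀ y : M, ell y ^ Nat.card M = 1 := by
    intro y
    haveI := hψ.1
    obtain ⟨u, hu⟩ := exists_ne (0 : E)
    have h1 : ∀ k : ℕ, ψ (⟨y, hMP y.2⟩ ^ k) u = ell y ^ k • u := by
      intro k
      induction k with
      | zero => simp
      | succ k ih => rw [pow_succ', map_mul, Module.End.mul_apply, ih, map_smul, hsc2, smul_smul, pow_succ]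
    have h2 := h1 (Nat.card M)
    have h3 : (⟨y, hMP y.2⟩ : R.1) ^ Nat.card M = 1 := by
      ext
      have h5 : ((y ^ Nat.card M : M) : G) = ((1 : M) : G) := by rw [pow_card_eq_one']
      exact h5
    rw [h3, map_one, Module.End.one_apply] at h2
    have h4 : (ell y ^ Nat.card M - 1) • u = 0 := by rw [sub_smul, ← h2, one_smul, sub_self]
    rcases smul_eq_zero.1 h4 with h | h
    · exact sub_eq_zero.1 h
    · exact absurd h hu
  have hcop : d.Coprime (Nat.card M) := by
    obtain ⟨k, hk⟩ := IsPGroup.iff_card.1 (R.2.to_le hMP)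
    rw [hk]
    exact ((Nat.Prime.coprime_iff_not_dvd hp).2 hdl).symm.pow_right k
  obtain ⟨e, he⟩ : ∃ e : ℕ, ∀ z : ℂ, z ^ Nat.card M = 1 → (z ^ d) ^ e = z := by
    obtain ⟨e, -, he⟩ := Nat.exists_mul_mod_eq_of_coprime 1 hcop (Nat.card_pos (α := M)).ne'
    refine ⟨e, fun z hz => ?_⟩
    rw [← pow_mul, pow_eq_pow_mod _ hz, he, ← pow_eq_pow_mod _ hz, pow_one]
  have hδ0 : ∀ g, δ g ≠ 0 := by
    intro g h
    have : δ g * δ g⁻¹ = 1 := by rw [← map_mul, mul_inv_cancel, map_one]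
    rw [h, zero_mul] at this
    exact zero_ne_one this
  let ψ' : Representation ℂ R.1 E :=
    { toFun := fun g => (δ g ^ e)⁻¹ • ψ g
      map_one' := by simp
      map_mul' := fun g h => by
        rw [map_mul, map_mul, mul_pow, mul_inv, smul_mul_smul_comm] }
  refine ⟨ψ', ⟨hψ.1, fun U hU => hψ.2 U (fun g u hu => ?_)⟩, ?_⟩
  · have h1 : (δ g ^ e)⁻¹ • ψ g u ∈ U := hU g u hu
    exact (Submodule.smul_mem_iff _ (inv_ne_zero (pow_ne_zero _ (hδ0 g)))).1 h1
  · intro y hy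
    ext u
    show (δ y ^ e)⁻¹ • ψ y u = u
    have h1 := hδ ⟨y, hy⟩
    have h2 := hsc2 ⟨y, hy⟩ u
    change δ y = _ at h1
    change ψ y u = _ at h2
    rw [h1, h2, he _ (hell _), inv_smul_smul₀]
    intro h
    have := hell ⟨y, hy⟩
    rw [h, zero_pow (Nat.card_pos (α := M)).ne'] at this
    exact zero_ne_one this

end caseone

section induct

/-- the contradiction statement proved by induction on the order -/
def TG (p a : ℕ) (G : Type) [Group G] : Prop :=
  ∀ (P : Sylow p G), NSeries p G → MinDeg (p ^ a) P.1 → StarP p a G →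
    ∀ (E : Type) [AddCommGroup E] [Module ℂ E] [FiniteDimensional ℂ E]
      (ψ : Representation ℂ P.1 E), RIrr ψ → finrank ℂ E = p ^ a → False

lemma rep_factor {A B E : Type} [Group A] [Group B] [AddCommGroup E] [Module ℂ E] (f : A →* B)
    (hf : Function.Surjective f) (ψ : Representation ℂ A E) (h : ∀ x, f x = 1 → ψ x = 1)
    (hψ : RIrr ψ) : ∃ ψ' : Representation ℂ B E, RIrr ψ' := by
  have hk : ∀ x y, f x = f y → ψ x = ψ y := by
    intro x y hxy
    have h1 : ψ (x * y⁻¹) = 1 := h _ (by rw [map_mul, map_inv, hxy, mul_inv_cancel])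
    have h2 : x = (x * y⁻¹) * y := by group
    rw [h2, map_mul, h1, one_mul]
  choose s hs using hf
  let ψ' : Representation ℂ B E :=
    { toFun := fun b => ψ (s b)
      map_one' := by
        show ψ (s 1) = 1
        rw [hk (s 1) 1 (by rw [hs, map_one]), map_one]
      map_mul' := fun b c => by
        show ψ (s (b * c)) = ψ (s b) * ψ (s c)
        rw [← map_mul]
        exact hk _ _ (by rw [hs, map_mul, hs, hs]) }
  refine ⟨ψ', hψ.1, fun U hU => hψ.2 U (fun g v hv => ?_)⟩
  have h1 : ψ (s (f g)) v ∈ U := hU (f g) v hv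
  rwa [hk (s (f g)) g (hs _)] at h1

lemma quot_step {G : Type} [Group G] [Finite G] {p a : ℕ} (hp : p.Prime) (M : Subgroup G)
    [M.Normal] (hM : M ≠ ⊥)
    (IH : ∀ (H : Type) [Group H] [Finite H], Nat.card H < Nat.card G → TG p a H)
    (P : Sylow p G) (hns : NSeries p G) (hmin : MinDeg (p ^ a) P.1) (hstar : StarP p a G)
    {E : Type} [AddCommGroup E] [Module ℂ E] [FiniteDimensional ℂ E]
    (ψ : Representation ℂ P.1 E) (hψ : RIrr ψ) (hdim : finrank ℂ E = p ^ a)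
    (htriv : ∀ y : P.1, (y : G) ∈ M → ψ y = 1) : False := by
  haveI : Fact p.Prime := ⟨hp⟩
  let π : G →* G ⧸ M := QuotientGroup.mk' M
  have hπs : Function.Surjective π := QuotientGroup.mk'_surjective _
  have hπk : ∀ x, π x = 1 ↔ x ∈ M := fun x => QuotientGroup.eq_one_iff x
  let P' := P.mapSurjective hπs
  let f : P.1 →* P'.1 := (π.comp P.1.subtype).codRestrict P'.1 (fun x => ⟨x, x.2, rfl⟩)
  have hf : Function.Surjective f := by
    rintro ⟨_, x, hx, rfl⟩
    exact ⟨⟨x, hx⟩, rfl⟩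
  obtain ⟨ψ', hψ'⟩ := rep_factor f hf ψ
    (fun x hx => htriv x ((hπk _).1 (congrArg Subtype.val hx))) hψ
  refine IH (G ⧸ M) ?_ P' (nseries_quot π hπs hns) (mindeg_quot f hf hmin)
    (star_quot π hπs hstar) E ψ' hψ' hdim
  have h1 := Subgroup.card_eq_card_quotient_mul_card_subgroup M
  rw [h1]
  have h2 : 1 < Nat.card M := by
    rw [Subgroup.one_lt_card_iff_ne_bot]; exact hM
  have h3 : 0 < Nat.card (G ⧸ M) := Nat.card_pos
  nlinarith

lemma main_T {p a : ℕ} (hp : p.Prime) (ha : 1 < p ^ a) : ∀ (n : ℕ) (G : Type) [Group G] [Finite G],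
    Nat.card G = n → TG p a G := by
  haveI : Fact p.Prime := ⟨hp⟩
  intro n
  induction n using Nat.strong_induction_on with
  | _ n ih =>
  intro G _ _ hcard P hns hmin hstar E _ _ _ ψ hψ hdim
  have IH : ∀ (H : Type) [Group H] [Finite H], Nat.card H < Nat.card G → TG p a H :=
    fun H _ _ hH => ih _ (hcard ▸ hH) H rfl
  have hns' := hns
  obtain ⟨n, M, hM0, hMn, hMN, hM⟩ := hns'
  obtain ⟨t, ht0, ht1⟩ : ∃ t, M t = ⊥ ∧ M (t + 1) ≠ ⊥ := by
    by_contra hcon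
    push Not at hcon
    have hall : ∀ t, M t = ⊥ := by
      intro t
      induction t with
      | zero => exact hM0
      | succ k ih => exact hcon k ih
    have htop : (⊤ : Subgroup G) = ⊥ := by rw [← hMn, hall]
    have hone : ∀ x : P.1, x = 1 := by
      intro x
      ext
      exact Subgroup.mem_bot.1 (htop ▸ Subgroup.mem_top (x : G))
    haveI := hψ.1
    obtain ⟨u, hu⟩ := exists_ne (0 : E)
    have hU : RInv ψ (Submodule.span ℂ {u}) := by
      intro g v hv
      rw [hone g, map_one]; exact hv
    rcases hψ.2 _ hU with h | h
    · exact hu (Submodule.span_singleton_eq_bot.1 h)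
    · have h1 := finrank_span_singleton (K := ℂ) hu
      rw [h, finrank_top, hdim] at h1
      omega
  haveI hN := hMN (t + 1)
  rcases (hM t).2 with hpf | hpf
  · -- `p`-group
    rw [ht0] at hpf
    have hNp : IsPGroup p (M (t + 1)) := by
      intro x
      obtain ⟨k, hk⟩ := hpf x x.2
      exact ⟨k, Subtype.ext (Subgroup.mem_bot.1 hk)⟩
    let Z : Subgroup G := (Subgroup.center (M (t + 1))).map (M (t + 1)).subtype
    haveI hZN : Z.Normal := ConjAct.normal_of_characteristic_of_normal
    have hZP : Z ≤ P.1 := (Subgroup.map_subtype_le _).trans (IsPGroup.le_sylow_of_normal hNp P)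
    have hZ : Z ≠ ⊥ := by
      haveI : Nontrivial (M (t + 1)) := (Subgroup.nontrivial_iff_ne_bot _).2 ht1
      haveI := hNp.center_nontrivial
      intro h
      rw [Subgroup.map_eq_bot_iff_of_injective _ (Subgroup.subtype_injective _)] at h
      exact (Subgroup.nontrivial_iff_ne_bot _).1 this h
    have hZab : ∀ x y : Z, x * y = y * x := by
      rintro ⟨_, x, hx, rfl⟩ ⟨_, y, hy, rfl⟩
      apply Subtype.ext
      have h5 : ((x * y : M (t + 1)) : G) = ((y * x : M (t + 1)) : G) := by
        rw [Subgroup.mem_center_iff.1 hx y]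
      exact h5
    by_cases hQ : ∀ Q : Sylow p G, (P.1 ⊓ Q.1).relIndex P.1 ≤ p ^ a → Q = P
    · obtain ⟨ψ', hψ', htriv⟩ := case_one hp P hQ hstar Z hZP hZab ψ hψ hdim
      exact quot_step hp Z hZ IH P hns hmin hstar ψ' hψ' hdim htriv
    · push Not at hQ
      obtain ⟨Q, hQi, hQP⟩ := hQ
      exact case_two hp P Q hQP hmin hQi hns hstar
  · refine quot_step hp (M (t + 1)) ht1 IH P hns hmin hstar ψ hψ hdim ?_
    intro y hy
    have : y = 1 := by
      obtain ⟨m, hmc, hm⟩ := hpf _ hy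
      rw [ht0] at hm
      obtain ⟨k, hk⟩ := IsPGroup.iff_orderOf.1 P.2 y
      ext
      apply Subgroup.mem_bot.1
      apply mem_of_pow_coprime _ _ m hm
      rw [Subgroup.orderOf_coe, hk]
      exact hmc.pow_right k
    rw [this, map_one]

end induct

section bridge
open CategoryTheory

/-- morphism of `FDRep` from a commuting linear map -/
def endMk {G : Type} [Group G] (V : FDRep ℂ G) (A : V →ₗ[ℂ] V)
    (hA : ∀ g v, A (V.ρ g v) = V.ρ g (A v)) : V ⟶ V :=
  ⟨InducedCategory.homMk (ModuleCat.ofHom A), fun g => by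
    ext v
    exact hA g v⟩

/-- underlying linear map -/
def endLin {G : Type} [Group G] (V : FDRep ℂ G) (f : V ⟶ V) : V →ₗ[ℂ] V := f.hom.hom.hom

lemma endLin_comm {G : Type} [Group G] (V : FDRep ℂ G) (f : V ⟶ V) (g : G) (v : V) :
    endLin V f (V.ρ g v) = V.ρ g (endLin V f v) :=
  ConcreteCategory.congr_hom ((forget (FGModuleCat ℂ)).congr_map (f.comm g)) v

lemma endLin_inj {G : Type} [Group G] (V : FDRep ℂ G) (f f' : V ⟶ V) (h : endLin V f = endLin V f') :
    f = f' := by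
  apply Action.hom_ext
  ext v
  exact LinearMap.congr_fun h v

lemma endLin_mk {G : Type} [Group G] (V : FDRep ℂ G) (A : V →ₗ[ℂ] V)
    (hA : ∀ g v, A (V.ρ g v) = V.ρ g (A v)) : endLin V (endMk V A hA) = A := rfl

lemma endLin_smul {G : Type} [Group G] (V : FDRep ℂ G) (c : ℂ) (f : V ⟶ V) :
    endLin V (c • f) = c • endLin V f := rfl

lemma endLin_id {G : Type} [Group G] (V : FDRep ℂ G) : endLin V (𝟙 V) = LinearMap.id := rfl

lemma endLin_zero {G : Type} [Group G] (V : FDRep ℂ G) : endLin V 0 = 0 := rfl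

lemma simple_iff_rirr {G : Type} [Group G] [Finite G] (V : FDRep ℂ G) :
    Simple V ↔ RIrr (V.ρ : Representation ℂ G V) := by
  haveI : NeZero (Nat.card G : ℂ) := ⟨by exact_mod_cast (Nat.card_pos (α := G)).ne'⟩
  rw [FDRep.simple_iff_end_is_rank_one]
  constructor
  · intro h
    have hnt : Nontrivial V := by
      by_contra hn
      rw [not_nontrivial_iff_subsingleton] at hn
      have : Subsingleton (V ⟶ V) := ⟨fun f f' => endLin_inj V f f' (by ext v; exact Subsingleton.elim _ _)⟩
      rw [Module.finrank_zero_of_subsingleton] at h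
      exact zero_ne_one h
    refine ⟨hnt, fun U hU => ?_⟩
    obtain ⟨U', hU', hc⟩ := maschke_compl (V.ρ : Representation ℂ G V) U hU
    have hid : (𝟙 V : V ⟶ V) ≠ 0 := by
      intro h0
      have h1 := congrArg (endLin V) h0
      rw [endLin_id, endLin_zero] at h1
      obtain ⟨v, hv⟩ := exists_ne (0 : V)
      exact hv (LinearMap.congr_fun h1 v)
    let A : V →ₗ[ℂ] V := U.subtype.comp (Submodule.linearProjOfIsCompl U U' hc)
    have hAU : ∀ u ∈ U, A u = u := fun u hu => by
      have := Submodule.linearProjOfIsCompl_apply_left hc ⟨u, hu⟩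
      exact congrArg Subtype.val this
    have hAU' : ∀ u ∈ U', A u = 0 := fun u hu => by
      have := Submodule.linearProjOfIsCompl_apply_right hc ⟨u, hu⟩
      exact congrArg Subtype.val this
    have hA : ∀ g v, A (V.ρ g v) = V.ρ g (A v) := by
      intro g v
      obtain ⟨u, hu, u', hu', rfl⟩ := Submodule.mem_sup.1 (hc.sup_eq_top ▸ Submodule.mem_top : v ∈ U ⊔ U')
      rw [map_add, map_add, map_add, hAU _ (hU g u hu), hAU' _ (hU' g u' hu'), hAU u hu, hAU' u' hu',
        add_zero, add_zero]
    obtain ⟨c, hcA⟩ := (finrank_eq_one_iff_of_nonzero' _ hid).1 h (endMk V A hA)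
    have hcA' : ∀ v, A v = c • v := by
      intro v
      have := congrArg (endLin V) hcA
      rw [endLin_mk, endLin_smul, endLin_id] at this
      exact (LinearMap.congr_fun this v).symm
    by_cases hc0 : c = 0
    · left
      rw [eq_bot_iff]
      intro u hu
      have := hcA' u
      rw [hAU u hu, hc0, zero_smul] at this
      exact this
    · right
      rw [eq_top_iff]
      intro v _
      have h1 : A v ∈ U := (Submodule.linearProjOfIsCompl U U' hc v).2
      rw [hcA' v] at h1
      exact (Submodule.smul_mem_iff _ hc0).1 h1
  · rintro ⟨hnt, hirr⟩
    refine finrank_eq_one (𝟙 V) ?_ ?_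
    · intro h0
      have h1 := congrArg (endLin V) h0
      rw [endLin_id, endLin_zero] at h1
      obtain ⟨v, hv⟩ := exists_ne (0 : V)
      exact hv (LinearMap.congr_fun h1 v)
    · intro f
      obtain ⟨c, hcv⟩ := Module.End.exists_eigenvalue (K := ℂ) (V := V) (endLin V f)
      refine ⟨c, endLin_inj V _ _ ?_⟩
      have hU : RInv (V.ρ : Representation ℂ G V) (Module.End.eigenspace (endLin V f) c) := by
        intro g v hv
        rw [Module.End.mem_eigenspace_iff] at hv ⊢
        rw [endLin_comm, hv, map_smul]
      have htop := (hirr _ hU).resolve_left hcv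
      ext v
      have hv : v ∈ Module.End.eigenspace (endLin V f) c := htop ▸ Submodule.mem_top
      rw [Module.End.mem_eigenspace_iff] at hv
      rw [hv, endLin_smul, endLin_id]; rfl

lemma charDeg_character {G : Type} [Group G] (V : FDRep ℂ G) :
    charDeg (FDRep.character V) = finrank ℂ V := by
  rw [charDeg, FDRep.char_one]
  simp

lemma irr_of {G : Type} [Group G] [Finite G] {V : Type} [AddCommGroup V] [Module ℂ V]
    [FiniteDimensional ℂ V] (ρ : Representation ℂ G V) (h : RIrr ρ) :
    ∃ χ : G → ℂ, IsIrrChar χ ∧ charDeg χ = finrank ℂ V :=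
  ⟨FDRep.character (FDRep.of ρ), ⟨FDRep.of ρ, (simple_iff_rirr _).2 h, rfl⟩,
    charDeg_character (FDRep.of ρ)⟩

end bridge

end helpers

/-- Theorem 3.1: if `G` is `p`-solvable with `O_{p'}(G) = 1` and non-abelian Sylow
`p`-subgroup `P` with `m(P) = p^a`, then there is `χ ∈ Irr G` with `1 ≠ χ(1)_p ≤ p^a`. -/
theorem stmt_6 {G : Type} [Group G] [Fintype G] (p : ℕ) (hp : p.Prime)
    (hsolv : IsPSolvable p G)
    (hOp' : ∀ N : Subgroup G, N.Normal → ¬ p ∣ Nat.card N → N = ⊥)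
    (P : Sylow p G) (hnab : ¬ ∀ a b : ↥P.toSubgroup, a * b = b * a)
    (a : ℕ)
    (hm : IsLeast {d : ℕ | 1 < d ∧ ∃ χ : ↥P.toSubgroup → ℂ, IsIrrChar χ ∧ charDeg χ = d}
      (p ^ a)) :
    ∃ χ : G → ℂ, IsIrrChar χ ∧ pPart p (charDeg χ) ≠ 1 ∧ pPart p (charDeg χ) ≤ p ^ a := by
  obtain ⟨⟨ha, χ, ⟨E, hE, rfl⟩, hχ⟩, hlow⟩ := hm
  rw [charDeg_character] at hχ
  by_contra hcon
  push Not at hcon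
  refine main_T (a := a) hp ha _ G rfl P (nseries_of_psolvable hp hsolv) ?_ ?_ E E.ρ
    ((simple_iff_rirr E).1 hE) hχ
  · intro V _ _ _ ρ hρ
    by_cases h1 : Module.finrank ℂ V = 1
    · exact Or.inl h1
    · right
      haveI := hρ.1
      have h0 : 0 < Module.finrank ℂ V := Module.finrank_pos
      exact hlow ⟨by omega, irr_of ρ hρ⟩
  · intro V _ _ _ ρ hρ hd
    obtain ⟨χ, hχ1, hχ2⟩ := irr_of ρ hρ
    haveI := hρ.1
    have h0 : 0 < Module.finrank ℂ V := Module.finrank_pos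
    have h2 := hcon χ hχ1
    rw [hχ2, pPart] at h2
    have h3 : 0 < (Module.finrank ℂ V).factorization p := hp.factorization_pos_of_dvd h0.ne' hd
    have h4 := h2 (Nat.one_lt_pow h3.ne' hp.one_lt).ne'
    have h5 := (Nat.pow_lt_pow_iff_right hp.one_lt).1 h4
    exact (hp.pow_dvd_iff_le_factorization h0.ne').2 h5
end
end

section
/- Let P be a finite p-group acting by automorphisms on a finite group G, let N ⊴ G be P-invariant with G/N of order prime to p, and let C/N = C_{G/N}(P). For χ ∈ Irr_P(G) with Glauberman–Isaacs-type correspondent χ* ∈ Irr_P(C) satisfying χ|_C = e·χ* + pΔ + Ξ (with p ∤ e, Δ, Ξ characters of C or zero, and no constituent of Ξ lying over a P-invariant character of N), the multiplicity [χ|_C, χ*] is not divisible by p. -/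
open scoped BigOperators Classical

noncomputable section

/-- `f` is a character of `H` or zero: a nonnegative integer combination of irreducible
characters. -/
def IsCharOrZero {H : Type} [Group H] (f : H → ℂ) : Prop :=
  ∃ (k : ℕ) (c : Fin k → ℕ) (χs : Fin k → (H → ℂ)),
    (∀ i, IsIrrChar (χs i)) ∧ f = fun h => ∑ i, (c i : ℂ) * χs i h

namespace Stmt11

open Representation Module

open scoped ComplexOrder in
/-- Characters of finite groups take conjugate values at inverses (unitary trick). -/
lemma char_inv {G V : Type} [Group G] [Fintype G] [AddCommGroup V] [Module ℂ V]
    [FiniteDimensional ℂ V] (ρ : Representation ℂ G V) (g : G) :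
    ρ.character g⁻¹ = (starRingEnd ℂ) (ρ.character g) := by
  set b := Module.finBasis ℂ V
  set M : G → Matrix _ _ ℂ := fun g => LinearMap.toMatrix b b (ρ g) with hM
  have hmul : ∀ x y, M (x * y) = M x * M y := by
    intro x y
    simp only [hM, map_mul]
    exact LinearMap.toMatrix_mul b _ _
  have hone : M 1 = 1 := by
    simp only [hM, map_one]
    exact LinearMap.toMatrix_one b
  have htr : ∀ x, ρ.character x = (M x).trace := by
    intro x
    exact LinearMap.trace_eq_matrix_trace ℂ b (ρ x)
  set H : Matrix _ _ ℂ := ∑ x : G, (M x).conjTranspose * M x with hH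
  have hpos : H.PosDef := by
    have h1 : H = (M 1).conjTranspose * M 1 +
        ∑ x ∈ Finset.univ.erase (1 : G), (M x).conjTranspose * M x := by
      rw [hH, Finset.add_sum_erase _ (fun x => (M x).conjTranspose * M x) (Finset.mem_univ 1)]
    rw [h1, hone]
    apply Matrix.PosDef.add_posSemidef
    · simpa using Matrix.PosDef.one
    · exact Matrix.posSemidef_sum _ (fun x _ => Matrix.posSemidef_conjTranspose_mul_self _)
  have hinv : (M g).conjTranspose * H * M g = H := by
    rw [hH, Finset.mul_sum, Finset.sum_mul]
    rw [← Equiv.sum_comp (Equiv.mulRight g) (fun x => (M x).conjTranspose * M x)]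
    refine Finset.sum_congr rfl fun x _ => ?_
    simp [hmul, Matrix.conjTranspose_mul, Matrix.mul_assoc]
  have hg : M g * M g⁻¹ = 1 := by rw [← hmul]; simp [hone]
  have hu : IsUnit H.det := (Matrix.isUnit_iff_isUnit_det _).1 hpos.isUnit
  have e1 : (M g).conjTranspose = H * M g⁻¹ * H⁻¹ := by
    calc (M g).conjTranspose = (M g).conjTranspose * H * (M g * M g⁻¹) * H⁻¹ := by
          rw [hg, Matrix.mul_one, Matrix.mul_nonsing_inv_cancel_right _ _ hu]
      _ = ((M g).conjTranspose * H * M g) * M g⁻¹ * H⁻¹ := by simp only [Matrix.mul_assoc]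
      _ = _ := by rw [hinv]
  rw [htr, htr]
  have : (starRingEnd ℂ) (M g).trace = ((M g).conjTranspose).trace :=
    (Matrix.trace_conjTranspose _).symm
  rw [this, e1, Matrix.mul_assoc, Matrix.trace_mul_comm, Matrix.mul_assoc,
    Matrix.nonsing_inv_mul _ hu, Matrix.mul_one]

lemma inner_char {G V W : Type} [Group G] [Fintype G] [AddCommGroup V] [Module ℂ V]
    [FiniteDimensional ℂ V] [AddCommGroup W] [Module ℂ W] [FiniteDimensional ℂ W]
    (ρ : Representation ℂ G V) (σ : Representation ℂ G W) :
    charInner G ρ.character σ.character = finrank ℂ (IntertwiningMap σ ρ) := by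
  have : Invertible (Nat.card G : ℂ) := invertibleOfNonzero (by simp)
  rw [← card_inv_mul_sum_char_mul_char_eq_finrank]
  simp only [charInner, char_inv]

lemma irr_iff {G : Type} [Group G] [Fintype G] (χ : G → ℂ) :
    IsIrrChar χ ↔ ∃ (V : Type) (_ : AddCommGroup V) (_ : Module ℂ V) (_ : FiniteDimensional ℂ V)
      (ρ : Representation ℂ G V), ρ.character = χ ∧ finrank ℂ (IntertwiningMap ρ ρ) = 1 := by
  have hi : Invertible (Nat.card G : ℂ) := invertibleOfNonzero (by simp)
  have h0 : (Nat.card G : ℂ) ≠ 0 := by simp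
  constructor
  · rintro ⟨V, hV, rfl⟩
    refine ⟨V, inferInstance, inferInstance, inferInstance, V.ρ, rfl, ?_⟩
    have h1 := (FDRep.simple_iff_char_is_norm_one V).1 hV
    have h2 := card_inv_mul_sum_char_mul_char_eq_finrank (k := ℂ) (V.ρ) (V.ρ)
    change (Nat.card G : ℂ)⁻¹ * ∑ g : G, V.character g * V.character g⁻¹ = _ at h2
    rw [h1, inv_mul_cancel₀ h0] at h2
    exact_mod_cast h2.symm
  · rintro ⟨V, _, _, _, ρ, rfl, h⟩
    refine ⟨FDRep.of ρ, ?_, rfl⟩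
    rw [FDRep.simple_iff_char_is_norm_one]
    have h2 := card_inv_mul_sum_char_mul_char_eq_finrank (k := ℂ) ρ ρ
    rw [h, inv_mul_eq_iff_eq_mul₀ h0] at h2
    rw [mul_comm, Nat.cast_one, one_mul] at h2
    exact h2

lemma irr_inner_self {G : Type} [Group G] [Fintype G] {χ : G → ℂ} (h : IsIrrChar χ) :
    charInner G χ χ = 1 := by
  obtain ⟨V, _, _, _, ρ, rfl, hn⟩ := (irr_iff χ).1 h
  rw [inner_char, hn, Nat.cast_one]

lemma irr_inner_ne {G : Type} [Group G] [Fintype G] {χ η : G → ℂ} (h : IsIrrChar χ)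
    (h' : IsIrrChar η) (hne : χ ≠ η) : charInner G χ η = 0 := by
  have hi : Invertible (Nat.card G : ℂ) := invertibleOfNonzero (by simp)
  obtain ⟨V, hV, rfl⟩ := h
  obtain ⟨W, hW, rfl⟩ := h'
  have := FDRep.char_orthonormal V W
  rw [if_neg (fun ⟨i⟩ => hne (FDRep.char_iso i))] at this
  refine Eq.trans ?_ this
  rw [charInner]
  congr 1
  refine Finset.sum_congr rfl fun g _ => ?_
  rw [show W.character g⁻¹ = _ from char_inv W.ρ g]
  rfl

lemma irr_twist {G : Type} [Group G] [Fintype G] {χ : G → ℂ} (h : IsIrrChar χ) (α : MulAut G) :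
    IsIrrChar (fun g => χ (α g)) := by
  obtain ⟨V, _, _, _, ρ, rfl, hn⟩ := (irr_iff χ).1 h
  let σ : Representation ℂ G V := ρ.comp α.toMonoidHom
  refine (irr_iff _).2 ⟨V, inferInstance, inferInstance, inferInstance, σ, rfl, ?_⟩
  have h1 := inner_char σ σ
  have h2 := inner_char ρ ρ
  rw [hn] at h2
  have : charInner G σ.character σ.character = charInner G ρ.character ρ.character := by
    unfold charInner
    congr 1
    exact Equiv.sum_comp α.toEquiv (fun g => ρ.character g * (starRingEnd ℂ) (ρ.character g))
  rw [this, h2] at h1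
  exact_mod_cast h1.symm

lemma irr_conj {G : Type} [Group G] {χ : G → ℂ} (h : IsIrrChar χ) (m n : G) :
    χ (m * n * m⁻¹) = χ n := by
  obtain ⟨V, hV, rfl⟩ := h
  exact FDRep.char_conj V n m

lemma inner_twist {G : Type} [Group G] [Fintype G] (χ η : G → ℂ) (α : MulAut G) :
    charInner G (fun g => χ (α g)) (fun g => η (α g)) = charInner G χ η := by
  unfold charInner
  congr 1
  exact Equiv.sum_comp α.toEquiv (fun g => χ g * (starRingEnd ℂ) (η g))

lemma inner_conj {G : Type} [Group G] [Fintype G] (χ η : G → ℂ) :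
    (starRingEnd ℂ) (charInner G χ η) = charInner G η χ := by
  simp [charInner, mul_comm]

/-- Every nonzero representation has an irreducible constituent. -/
lemma exists_constituent {G V : Type} [Group G] [Fintype G] [AddCommGroup V] [Module ℂ V]
    [FiniteDimensional ℂ V] [Nontrivial V] (ρ : Representation ℂ G V) :
    ∃ θ : G → ℂ, IsIrrChar θ ∧ charInner G ρ.character θ ≠ 0 := by
  have : NeZero (Nat.card G : ℂ) := ⟨by simp⟩
  have : Nontrivial ρ.asModule := inferInstanceAs (Nontrivial V)
  obtain ⟨S, hS⟩ := IsSemisimpleModule.exists_simple_submodule (MonoidAlgebra ℂ G) ρ.asModule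
  have hat : IsAtom S := isSimpleModule_iff_isAtom.1 hS
  let E := Subrepresentation.subrepresentationSubmoduleOrderIso (ρ := ρ)
  have hR' : IsAtom (E.symm S) := (OrderIso.isAtom_iff E.symm S).2 hat
  obtain ⟨R, hR⟩ : ∃ R : Subrepresentation ρ, IsAtom R := ⟨_, hR'⟩
  set σ := R.toRepresentation with hσ
  have hRbot : R.toSubmodule ≠ ⊥ := fun h => hR.1 (Subrepresentation.toSubmodule_injective h)
  have hirr : IsIrreducible σ := by
    have hnt : Nontrivial (Subrepresentation σ) := by
      refine ⟨⊥, ⊤, fun h => hRbot ?_⟩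
      have h' : (⊥ : Submodule ℂ R.toSubmodule) = ⊤ := congrArg Subrepresentation.toSubmodule h
      have := (Submodule.subsingleton_iff ℂ).1 (subsingleton_of_bot_eq_top h')
      exact Submodule.subsingleton_iff_eq_bot.1 this
    refine { eq_bot_or_eq_top := fun U => ?_ }
    let U' : Subrepresentation ρ :=
      { toSubmodule := U.toSubmodule.map R.toSubmodule.subtype
        apply_mem_toSubmodule := by
          rintro g v ⟨u, hu, rfl⟩
          exact ⟨σ g u, U.apply_mem_toSubmodule g hu, rfl⟩ }
    have hle : U' ≤ R := by
      rintro v ⟨u, hu, rfl⟩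
      exact u.2
    rcases hR.le_iff.1 hle with h | h
    · left
      apply Subrepresentation.toSubmodule_injective
      have h' : U.toSubmodule.map R.toSubmodule.subtype = ⊥ :=
        congrArg Subrepresentation.toSubmodule h
      refine eq_bot_iff.2 fun u hu => ?_
      have hu' : (u : V) ∈ (⊥ : Submodule ℂ V) := h'.le ⟨u, hu, rfl⟩
      exact Subtype.ext hu'
    · right
      apply Subrepresentation.toSubmodule_injective
      have h' : U.toSubmodule.map R.toSubmodule.subtype = R.toSubmodule :=
        congrArg Subrepresentation.toSubmodule h
      refine eq_top_iff.2 fun u _ => ?_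
      have hu : (u : V) ∈ U.toSubmodule.map R.toSubmodule.subtype := h'.ge u.2
      obtain ⟨w, hw, hwu⟩ := hu
      have : w = u := Subtype.ext hwu
      exact this ▸ hw
  refine ⟨σ.character, (irr_iff _).2 ⟨_, inferInstance, inferInstance, inferInstance, σ, rfl,
    IsIrreducible.finrank_intertwiningMap_self _⟩, ?_⟩
  rw [inner_char]
  let i : IntertwiningMap σ ρ := ⟨R.toSubmodule.subtype, fun g => rfl⟩
  have hi : i ≠ 0 := by
    intro h0
    apply hRbot
    rw [eq_bot_iff]
    intro v hv
    exact congrArg (fun j : IntertwiningMap σ ρ => j ⟨v, hv⟩) h0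
  have : Nontrivial (IntertwiningMap σ ρ) := ⟨i, 0, hi⟩
  have hpos := finrank_pos (R := ℂ) (M := IntertwiningMap σ ρ)
  exact_mod_cast Nat.ne_of_gt hpos

/-- Schur's lemma for invariant averages. -/
lemma schur_avg {K N V : Type} [Group K] [Group N] [Fintype N] [AddCommGroup V] [Module ℂ V]
    [FiniteDimensional ℂ V] (ρ : Representation ℂ K V) (h : finrank ℂ (IntertwiningMap ρ ρ) = 1)
    (ι : N →* K) (α : K →* MulAut N) (hι : ∀ k n, ι (α k n) = k * ι n * k⁻¹)
    (f : N → ℂ) (hf : ∀ k n, f (α k n) = f n) :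
    ∃ c : ℂ, (∑ n, f n • ρ (ι n) = c • (1 : V →ₗ[ℂ] V)) ∧
      ∑ n, f n * ρ.character (ι n) = c * finrank ℂ V := by
  let T : IntertwiningMap ρ ρ := ⟨∑ n, f n • ρ (ι n), fun k => by
    change (∑ n, f n • ρ (ι n)) * ρ k = ρ k * (∑ n, f n • ρ (ι n))
    rw [Finset.sum_mul, Finset.mul_sum, ← Equiv.sum_comp (α k).toEquiv]
    refine Finset.sum_congr rfl fun n _ => ?_
    simp [hf, hι, mul_assoc, ← map_mul]⟩
  have h1 : (IntertwiningMap.id ρ) ≠ 0 := by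
    intro h0
    have : Subsingleton (IntertwiningMap ρ ρ) := by
      refine ⟨fun a b => ?_⟩
      have : ∀ x : IntertwiningMap ρ ρ, x = 0 := fun x => by
        have : x = (IntertwiningMap.id ρ).comp x := by ext; rfl
        rw [this, h0]; ext; rfl
      rw [this a, this b]
    rw [finrank_zero_of_subsingleton] at h
    exact zero_ne_one h
  obtain ⟨c, hc⟩ := (finrank_eq_one_iff_of_nonzero' _ h1).1 h T
  have h2 : (∑ n, f n • ρ (ι n) = c • (1 : V →ₗ[ℂ] V)) :=
    (congrArg IntertwiningMap.toLinearMap hc).symm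
  refine ⟨c, h2, ?_⟩
  have h3 := congrArg (LinearMap.trace ℂ V) h2
  simpa [Representation.character] using h3

/-- Clifford: constituents of the restriction to a normal subgroup are conjugate. -/
lemma clifford {K N : Type} [Group K] [Fintype K] [Group N] [Fintype N]
    (ι : N →* K) (α : K →* MulAut N) (hι : ∀ k n, ι (α k n) = k * ι n * k⁻¹)
    {χ : K → ℂ} (hχ : IsIrrChar χ) {θ θ' : N → ℂ} (hθ : IsIrrChar θ) (hθ' : IsIrrChar θ')
    (h1 : charInner N (fun n => χ (ι n)) θ ≠ 0) (h2 : charInner N (fun n => χ (ι n)) θ' ≠ 0) :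
    ∃ k : K, θ' = fun n => θ (α k n) := by
  by_contra hcon
  push Not at hcon
  have hN : (Nat.card N : ℂ) ≠ 0 := by simp
  have hK : (Nat.card K : ℂ) ≠ 0 := by simp
  obtain ⟨V, _, _, _, ρ, rfl, hV⟩ := (irr_iff χ).1 hχ
  obtain ⟨W, _, _, _, σ, rfl, hW⟩ := (irr_iff θ').1 hθ'
  set f : N → ℂ := fun n => ∑ k : K, (starRingEnd ℂ) (θ (α k n)) with hf
  have hf1 : ∀ k n, f (α k n) = f n := by
    intro j n
    simp only [hf]
    rw [← Equiv.sum_comp (Equiv.mulRight j) (fun k => (starRingEnd ℂ) (θ (α k n)))]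
    simp
  have hf2 : ∀ m n, f (MulAut.conj m n) = f n := by
    intro m n
    simp only [hf, MulAut.conj_apply, map_mul, map_inv, irr_conj hθ]
  obtain ⟨c, hc1, hc2⟩ := schur_avg ρ hV ι α hι f hf1
  obtain ⟨d, hd1, hd2⟩ := schur_avg σ hW (MonoidHom.id N) MulAut.conj (by simp) f hf2
  have key : ∀ ψ : N → ℂ, ∑ n, f n * ψ n =
      Nat.card N * ∑ k : K, charInner N ψ (fun n => θ (α k n)) := by
    intro ψ
    simp only [hf, charInner]
    rw [← Finset.mul_sum, mul_inv_cancel_left₀ hN, Finset.sum_comm]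
    refine Finset.sum_congr rfl fun n _ => ?_
    rw [Finset.sum_mul]
    exact Finset.sum_congr rfl fun n _ => mul_comm _ _
  have hc0 : c ≠ 0 := by
    rintro rfl
    rw [zero_mul, key] at hc2
    have : ∀ k : K, charInner N (fun n => ρ.character (ι n)) (fun n => θ (α k n)) =
        charInner N (fun n => ρ.character (ι n)) θ := by
      intro k
      rw [← inner_twist (fun n => ρ.character (ι n)) θ (α k)]
      simp only [hι, char_conj]
    simp only [this] at hc2
    rw [Finset.sum_const, nsmul_eq_mul, Finset.card_univ, ← Nat.card_eq_fintype_card] at hc2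
    exact mul_ne_zero hN (mul_ne_zero hK h1) hc2
  have hfr : (finrank ℂ W : ℂ) ≠ 0 := by
    intro h0
    have h0 : finrank ℂ W = 0 := by exact_mod_cast h0
    have := Module.finrank_zero_iff.1 h0
    have : Subsingleton (IntertwiningMap σ σ) :=
      ⟨fun a b => by ext x; exact Subsingleton.elim _ _⟩
    rw [finrank_zero_of_subsingleton] at hW
    exact zero_ne_one hW
  have hd0 : d = 0 := by
    have : ∀ k : K, charInner N σ.character (fun n => θ (α k n)) = 0 := fun k =>
      irr_inner_ne hθ' (irr_twist hθ (α k)) (hcon k)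
    have h3 := key σ.character
    simp only [this, Finset.sum_const_zero, mul_zero] at h3
    simp only [MonoidHom.id_apply, h3] at hd2
    exact (mul_eq_zero.1 hd2.symm).resolve_right hfr
  subst hd0
  let τ : Representation ℂ N V := ρ.comp ι
  have h4 : charInner N τ.character σ.character ≠ 0 := h2
  rw [inner_char] at h4
  apply h4
  have : Subsingleton (IntertwiningMap σ τ) := by
    have : ∀ x : IntertwiningMap σ τ, x = 0 := fun x => by
      ext w
      have e1 : (∑ n, f n • τ n) (x w) = x ((∑ n, f n • σ n) w) := by
        simp only [LinearMap.sum_apply, LinearMap.smul_apply, map_sum, map_smul]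
        refine Finset.sum_congr rfl fun n _ => ?_
        rw [x.isIntertwining]
      have e2 : (∑ n, f n • τ n) = c • (1 : V →ₗ[ℂ] V) := hc1
      have e3 : (∑ n, f n • σ n) = (0 : ℂ) • (1 : W →ₗ[ℂ] W) := hd1
      rw [e2, e3] at e1
      simpa [hc0] using e1
    exact ⟨fun a b => by rw [this a, this b]⟩
  rw [finrank_zero_of_subsingleton, Nat.cast_zero]

/-- The action of `K` on a stable set of functions on `N`. -/
def actOn {K N : Type} [Group K] [Group N] (α : K →* MulAut N) (S : (N → ℂ) → Prop)
    (hS : ∀ k θ, S θ → S (fun n => θ (α k n))) : MulAction K {θ // S θ} where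
  smul k θ := ⟨fun n => θ.1 (α k⁻¹ n), hS _ _ θ.2⟩
  one_smul θ := by
    apply Subtype.ext
    funext n
    change θ.1 (α 1⁻¹ n) = θ.1 n
    simp
  mul_smul j k θ := by
    apply Subtype.ext
    funext n
    change θ.1 (α (j * k)⁻¹ n) = θ.1 (α k⁻¹ (α j⁻¹ n))
    rw [mul_inv_rev, map_mul, MulAut.mul_apply]

/-- The number of constituents of a restriction divides the index. -/
lemma card_constituents {K N : Type} [Group K] [Fintype K] [Group N] [Fintype N]
    (ι : N →* K) (α : K →* MulAut N) (hι : ∀ k n, ι (α k n) = k * ι n * k⁻¹)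
    (hα : ∀ m n, α (ι m) n = m * n * m⁻¹)
    {χ : K → ℂ} (hχ : IsIrrChar χ) :
    Nat.card {θ : N → ℂ // IsIrrChar θ ∧ charInner N (fun n => χ (ι n)) θ ≠ 0} ∣
      ι.range.index := by
  have hst : ∀ k (θ : N → ℂ), (IsIrrChar θ ∧ charInner N (fun n => χ (ι n)) θ ≠ 0) →
      (IsIrrChar (fun n => θ (α k n)) ∧
        charInner N (fun n => χ (ι n)) (fun n => θ (α k n)) ≠ 0) := by
    rintro k θ ⟨h1, h2⟩
    refine ⟨irr_twist h1 _, ?_⟩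
    rw [← inner_twist _ _ (α k)] at h2
    simpa only [hι, irr_conj hχ] using h2
  let _ := actOn α _ hst
  have hne : ∃ θ : N → ℂ, IsIrrChar θ ∧ charInner N (fun n => χ (ι n)) θ ≠ 0 := by
    obtain ⟨V, _, _, _, ρ, rfl, hV⟩ := (irr_iff χ).1 hχ
    have : Nontrivial V := by
      by_contra h
      have := not_nontrivial_iff_subsingleton.1 h
      have : Subsingleton (IntertwiningMap ρ ρ) :=
        ⟨fun a b => by ext x; exact Subsingleton.elim _ _⟩
      rw [finrank_zero_of_subsingleton] at hV
      exact zero_ne_one hV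
    exact exists_constituent (ρ.comp ι)
  obtain ⟨θ, hθ⟩ := hne
  have htr : MulAction.IsPretransitive K
      {θ : N → ℂ // IsIrrChar θ ∧ charInner N (fun n => χ (ι n)) θ ≠ 0} := by
    refine ⟨fun x y => ?_⟩
    obtain ⟨k, hk⟩ := clifford ι α hι hχ x.2.1 y.2.1 x.2.2 y.2.2
    refine ⟨k⁻¹, Subtype.ext ?_⟩
    rw [hk]
    funext n
    change x.1 (α k⁻¹⁻¹ n) = _
    rw [inv_inv]
  rw [← MulAction.index_stabilizer_of_transitive K (⟨θ, hθ⟩ :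
    {θ : N → ℂ // IsIrrChar θ ∧ charInner N (fun n => χ (ι n)) θ ≠ 0})]
  apply Subgroup.index_dvd_of_le
  rintro _ ⟨m, rfl⟩
  rw [MulAction.mem_stabilizer_iff]
  apply Subtype.ext
  funext n
  change θ (α (ι m)⁻¹ n) = θ n
  rw [← map_inv, hα, irr_conj hθ.1]

lemma inner_charOrZero {H : Type} [Group H] [Fintype H] {f η : H → ℂ} (hf : IsCharOrZero f)
    (hη : IsIrrChar η) : ∃ m : ℕ, charInner H f η = m := by
  obtain ⟨k, c, χs, hχs, rfl⟩ := hf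
  have h1 : ∀ i, ∃ m : ℕ, charInner H (χs i) η = m := fun i => by
    by_cases h : χs i = η
    · exact ⟨1, by rw [h, irr_inner_self hη, Nat.cast_one]⟩
    · exact ⟨0, by rw [irr_inner_ne (hχs i) hη h, Nat.cast_zero]⟩
  choose m hm using h1
  refine ⟨∑ i, c i * m i, ?_⟩
  push_cast
  simp only [← hm, charInner, Finset.sum_mul]
  rw [Finset.sum_comm, Finset.mul_sum]
  refine Finset.sum_congr rfl fun i _ => ?_
  simp only [Finset.mul_sum]
  exact Finset.sum_congr rfl fun i _ => by ring

/-- The automorphisms induced on an invariant subgroup. -/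
def resAut {G P : Type} [Group G] [Group P] (φ : P →* MulAut G) (N : Subgroup G)
    (h : ∀ a : P, ∀ n ∈ N, φ a n ∈ N) : P →* MulAut N where
  toFun a :=
    { toFun := fun n => ⟨φ a n, h a n n.2⟩
      invFun := fun n => ⟨φ a⁻¹ n, h a⁻¹ n n.2⟩
      left_inv := fun n => Subtype.ext (by simp)
      right_inv := fun n => Subtype.ext (by simp)
      map_mul' := fun m n => Subtype.ext (by simp) }
  map_one' := by ext n; simp
  map_mul' a b := by ext n; simp

end Stmt11

/-- Refinement of Theorem E of Navarro–Späth–Vallejo: in the relative Glauberman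
correspondence situation, with `χ|_C = e·χ* + pΔ + Ξ`, `p ∤ e`, and no constituent of `Ξ`
over a `P`-invariant character of `N`, the multiplicity `[χ|_C, χ*]` is prime to `p`. -/
theorem stmt_11 {G P : Type} [Group G] [Fintype G] [Group P] [Fintype P] (p : ℕ)
    (hp : p.Prime) (hPp : IsPGroup p P) (φ : P →* MulAut G)
    (N : Subgroup G) [N.Normal] (hNinv : ∀ a : P, ∀ n ∈ N, φ a n ∈ N)
    (hquot : ¬ p ∣ N.index)
    (C : Subgroup G) (hNC : N ≤ C)
    (hC : ∀ g : G, g ∈ C ↔ ∀ a : P, (φ a g) * g⁻¹ ∈ N)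
    (χ : G → ℂ) (hχ : IsIrrChar χ) (hχP : ∀ a : P, ∀ g : G, χ (φ a g) = χ g)
    (χstar : C → ℂ) (hχs : IsIrrChar χstar)
    (hχsP : ∀ a : P, ∀ c m : C, (m : G) = φ a (c : G) → χstar m = χstar c)
    (e : ℕ) (he : ¬ p ∣ e) (Δ Ξ : C → ℂ) (hΔ : IsCharOrZero Δ) (hΞ : IsCharOrZero Ξ)
    (hdec : ∀ c : C, χ (c : G) = e * χstar c + p * Δ c + Ξ c)
    (hΞ' : ∀ η : C → ℂ, IsIrrChar η → charInner C Ξ η ≠ 0 →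
      ¬ ∃ θ : N → ℂ, IsIrrChar θ ∧
        (∀ a : P, ∀ n m : N, (m : G) = φ a (n : G) → θ m = θ n) ∧
        charInner N (fun n : N => η ⟨(n : G), hNC n.2⟩) θ ≠ 0) :
    ∃ k : ℕ, charInner C (charRes C χ) χstar = k ∧ ¬ p ∣ k := by
  have hθ : ∃ θ : N → ℂ, IsIrrChar θ ∧
        (∀ a : P, ∀ n m : N, (m : G) = φ a (n : G) → θ m = θ n) ∧
        charInner N (fun n : N => χstar ⟨(n : G), hNC n.2⟩) θ ≠ 0 := by
    let ι : N →* C := Subgroup.inclusion hNC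
    let α : C →* MulAut N := (MulAut.conjNormal (H := N)).comp C.subtype
    let S : (N → ℂ) → Prop := fun θ => IsIrrChar θ ∧ charInner N (fun n => χstar (ι n)) θ ≠ 0
    have hcard : Nat.card {θ // S θ} ∣ ι.range.index :=
      Stmt11.card_constituents ι α (fun k n => Subtype.ext rfl) (fun m n => Subtype.ext rfl) hχs
    let β := Stmt11.resAut φ N hNinv
    have hβ : ∀ a (θ : N → ℂ), S θ → S (fun n => θ (β a n)) := by
      rintro a θ ⟨h1, h2⟩
      refine ⟨Stmt11.irr_twist h1 _, ?_⟩
      rw [← Stmt11.inner_twist _ _ (β a)] at h2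
      have : ∀ n : N, χstar (ι (β a n)) = χstar (ι n) := fun n => hχsP a _ _ rfl
      simpa only [this] using h2
    let _ := Stmt11.actOn β S hβ
    have hpc : ¬ p ∣ Nat.card {θ // S θ} := by
      intro h
      apply hquot
      refine (h.trans hcard).trans ?_
      have : ι.range = N.subgroupOf C := Subgroup.inclusion_range hNC
      rw [this]
      exact Subgroup.relIndex_dvd_index_of_le hNC
    have := Fact.mk hp
    obtain ⟨θ, hfix⟩ := hPp.nonempty_fixed_point_of_prime_not_dvd_card {θ // S θ} hpc
    refine ⟨θ.1, θ.2.1, fun a n m hm => ?_, θ.2.2⟩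
    have h1 := congrFun (congrArg Subtype.val (hfix a⁻¹)) n
    have h2 : θ.1 (β a⁻¹⁻¹ n) = θ.1 n := h1
    rw [inv_inv] at h2
    rw [← h2]
    have h3 : m = β a n := Subtype.ext hm
    rw [h3]
  have hΞ0 : charInner C Ξ χstar = 0 := by
    by_contra h
    exact hΞ' χstar hχs h hθ
  obtain ⟨m, hm⟩ := Stmt11.inner_charOrZero hΔ hχs
  have h1 := Stmt11.irr_inner_self hχs
  refine ⟨e + p * m, ?_, fun h => he ((Nat.dvd_add_left (dvd_mul_right p m)).1 h)⟩
  have h2 : charInner C (charRes C χ) χstar =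
      e * charInner C χstar χstar + p * charInner C Δ χstar + charInner C Ξ χstar := by
    simp only [charInner, charRes, hdec, add_mul, Finset.sum_add_distrib, Finset.mul_sum, mul_add]
    congr 1
    congr 1 <;> exact Finset.sum_congr rfl fun i _ => by ring
  rw [h2, h1, hm, hΞ0]
  push_cast
  ring
end
end
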